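/- arXiv:1104.0324 — 2 statements merged into one kernel-verified Lean document; each statement's English description precedes it below -/
import Mathlib

section
/- The null space over F_2 of the matrix A, i.e. the space of row vectors {x in F_2^I : x·A = 0}, has F_2-dimension exactly (q-1)^2/4. -/
/-!
In affine coordinates an internal point is a pair `(a, n)` with `n` a nonsquare, and the incidence
matrix becomes `Ac`. For a conic point `P` and a nonsquare `ω` the *horocycle* `(P, ω)` consists of
the internal points `p` with `Q(p) / B(p, P)² = ω` (the value `hor p P`), where `B` is the polar
form of the conic; `Φ` is the incidence matrix of internal points and horocycles. Every parity
needed about horocycles follows by moving a conic point to infinity (`transport`) and by pairing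
points off under an involution. Write `q = 2k + 1`; then there are `k` nonsquares and `k(2k + 1)`
internal points, and the claim is that `A` has rank `k(k + 1)`.

The basic identity is `sum_beta_hor`: `A` maps the indicator of the horocycle `(P, ω)` to the
indicator of the horocycle `(P, -ω)`, or to zero if `-ω` is a square.

*`-1` a nonsquare.* Here `A Φ = 0`. Conversely `1 + A²` equals the all-one matrix plus a matrix that
factors through `Φ` (`sum_beta_beta`, `sum_mem_half`), so the kernel of `A` is the column space of
`Φ` (`ker_Ac_eq`). The rank of `Φ` is `k²`. The upper bound holds because the kernel of `Φ` contains
the row space of `Φ` and the `q`-dimensional space `V0` of functions depending on centres only,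
which share at most the constants (`rank_Phi_le`). For the lower bound, if `x` and its translate by
the square `λ` of a generator of `Kˣ` both lie in the kernel of `Φ`, the equations `ΦᵀΦx = 0` force
invariance of `x` under `λ²`, hence under all squares, so `x ∈ V0` (`rank_Phi_ge`).

*`-1` a square.* The nonsquares split into two cosets of the fourth powers, exchanged by inversion.
Let `Φ₁` be the part of `Φ` belonging to one coset, which has `(q + 1) k / 2 = k(k + 1)` columns, and
`Φ₁⁻` the part belonging to its negatives. Then `Φ₁ᵀ Φ₁ = 1` (`Phi1_gram`), `A Φ₁⁻ = Φ₁`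
(`Ac_mul_Phi1neg`) and `A = Φ₁⁻ Φ₁ᵀ` (`Ac_eq`), which gives the rank. The last identity counts the
conic points at which `p` and `r` have opposite coordinates, of which there are at most four
(`sum_cls`).
-/

open scoped Classical

noncomputable section

namespace ConicPaper

variable (K : Type) [Field K] [Fintype K]

/-- Points (and also lines, via homogeneous coordinates) of `PG(2,q)`. -/
abbrev Pt := Projectivization K (Fin 3 → K)

instance : Fintype (Pt K) := @Fintype.ofFinite _ (Quotient.finite _)

/-- `a` is a nonsquare in `K`. -/
def Nonsq (a : K) : Prop := ¬ IsSquare a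

/-- The quadratic form `Q(x0,x1,x2) = x1^2 - x0*x2` defining the conic. -/
def Qf (v : Fin 3 → K) : K := v 1 ^ 2 - v 0 * v 2

/-- A point is internal when `Q` of (a representative of) it is a nonsquare. -/
def Internal (p : Pt K) : Prop := Nonsq K (Qf K p.rep)

/-- A point is external when `Q` of it is a nonzero square. -/
def External (p : Pt K) : Prop := Qf K p.rep ≠ 0 ∧ IsSquare (Qf K p.rep)

/-- The point `p` lies on the line `ℓ = [b0,b1,b2]`. -/
def OnL (p ℓ : Pt K) : Prop :=
  p.rep 0 * ℓ.rep 0 + p.rep 1 * ℓ.rep 1 + p.rep 2 * ℓ.rep 2 = 0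

/-- Discriminant `b1^2 - 4 b0 b2` of a line. -/
def lineDisc (ℓ : Pt K) : K := ℓ.rep 1 ^ 2 - 4 * ℓ.rep 0 * ℓ.rep 2

/-- A line is a passant when its discriminant is a nonsquare. -/
def Passant (ℓ : Pt K) : Prop := Nonsq K (lineDisc K ℓ)

/-- A line is a secant when its discriminant is a nonzero square. -/
def Secant (ℓ : Pt K) : Prop := lineDisc K ℓ ≠ 0 ∧ IsSquare (lineDisc K ℓ)

/-- The incidence pairing of the vector `w` with the polar line
`p^⊥ = [z, -2y, x]` of the point `p = (x,y,z)`. -/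
def perpDot (p : Pt K) (w : Fin 3 → K) : K :=
  w 0 * p.rep 2 + w 1 * (-2 * p.rep 1) + w 2 * p.rep 0

/-- The point `r` lies on the passant line `p^⊥`. -/
def OnPerp (p r : Pt K) : Prop := perpDot K p r.rep = 0

/-- The (finite) set `I` of internal points, as a type. -/
abbrev Ipts := {p : Pt K // Internal K p}

instance : Fintype (Ipts K) := Fintype.ofFinite _

/-- The incidence matrix `A` of passant lines versus internal points over `F_2`:
rows are indexed by internal points `p` (standing for the passant lines `p^⊥`),
columns by internal points `r`, with entry `1` iff `r` lies on `p^⊥`. -/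
def Amat : Matrix (Ipts K) (Ipts K) (ZMod 2) :=
  Matrix.of fun p r => if OnPerp K p.1 r.1 then 1 else 0

section Proof

set_option linter.unusedSectionVars false

variable {K}

/-! ### Affine coordinates and horocycles -/

/-- The nonsquares of `K`. -/
abbrev Nsq (K : Type) [Field K] := {n : K // ¬ IsSquare n}

/-- Affine coordinates for internal points: `(a, n)` stands for `(1, a, a^2 - n)`. -/
abbrev IC (K : Type) [Field K] := K × Nsq K

/-- The polar form of the conic, paired between the internal point `(a, n)` and the conic point
`(1, t, t^2)`. It never vanishes, since internal points lie on no tangent. -/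
def gq (p : IC K) (t : K) : K := (t - p.1) ^ 2 - p.2

/-- The polar form paired between two internal points; it vanishes exactly when each of them lies on
the polar line of the other. -/
def beta (p r : IC K) : K := (p.1 - r.1) ^ 2 - p.2 - r.2

/-- The horocycle coordinate of the internal point `p` with respect to the conic point `P`, namely
`Q(p) / B(p, P)^2` for the representatives `(1, t, t^2)` of `some t` and `(0, 0, 1)` of `none`.
The internal points with a given coordinate `ω` form the horocycle `(P, ω)` centred at `P`. -/
def hor (p : IC K) : Option K → K
  | none => p.2
  | some t => p.2 / gq p t ^ 2

/-- The incidence matrix in affine coordinates. -/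
def Ac (K : Type) [Field K] : Matrix (IC K) (IC K) (ZMod 2) :=
  Matrix.of fun p r => if beta p r = 0 then 1 else 0

lemma Nsq.ne_zero (n : Nsq K) : (n : K) ≠ 0 := fun h => n.2 (h ▸ IsSquare.zero)

lemma nonsq_mul_sq {a : K} (ha : ¬ IsSquare a) {w : K} (hw : w ≠ 0) : ¬ IsSquare (a * w ^ 2) := by
  rintro ⟨c, hc⟩
  exact ha ⟨c / w, by field_simp; rw [hc]; ring⟩

lemma gq_ne_zero (p : IC K) (t : K) : gq p t ≠ 0 := by
  intro h
  exact p.2.2 ⟨t - p.1, by unfold gq at h; linear_combination -h⟩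

lemma hor_nonsq (p : IC K) (P : Option K) : ¬ IsSquare (hor p P) := by
  cases P with
  | none => exact p.2.2
  | some t =>
    have := nonsq_mul_sq p.2.2 (inv_ne_zero (gq_ne_zero p t))
    simpa [hor, div_eq_mul_inv, inv_pow] using this

lemma hor_ne_zero (p : IC K) (P : Option K) : hor p P ≠ 0 :=
  fun h => hor_nonsq p P (h ▸ IsSquare.zero)

lemma beta_comm (p r : IC K) : beta p r = beta r p := by unfold beta; ring

/-! ### Moving a conic point to infinity -/

/-- The action of `z ↦ 1/(z - t)` on internal points: `(a, n)` stands for the conjugate pair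
`a ± √n` of `F_{q²}`. -/
def movI (t : K) (p : IC K) : IC K :=
  ((p.1 - t) / gq p t, ⟨p.2 / gq p t ^ 2, hor_nonsq p (some t)⟩)

/-- The inverse `z ↦ 1/z + t` of `movI t`. -/
def movI' (t : K) (p : IC K) : IC K :=
  (p.1 / gq p 0 + t, ⟨p.2 / gq p 0 ^ 2, hor_nonsq p (some 0)⟩)

lemma gq_movI (t : K) (p : IC K) : gq (movI t p) 0 = 1 / gq p t := by
  have h := gq_ne_zero p t
  have : gq (movI t p) 0 = ((p.1 - t) ^ 2 - p.2) / gq p t ^ 2 := by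
    change (0 - (p.1 - t) / gq p t) ^ 2 - (p.2 : K) / gq p t ^ 2 = _; ring
  rw [this, show (p.1 - t) ^ 2 - (p.2 : K) = gq p t by unfold gq; ring]
  field_simp

lemma gq_movI' (t : K) (p : IC K) : gq (movI' t p) t = 1 / gq p 0 := by
  have h := gq_ne_zero p 0
  have : gq (movI' t p) t = (p.1 ^ 2 - p.2) / gq p 0 ^ 2 := by
    change (t - (p.1 / gq p 0 + t)) ^ 2 - (p.2 : K) / gq p 0 ^ 2 = _; ring
  rw [this, show p.1 ^ 2 - (p.2 : K) = gq p 0 by unfold gq; ring]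
  field_simp

/-- `movI t` as a permutation. -/
def movIE (t : K) : IC K ≃ IC K where
  toFun := movI t
  invFun := movI' t
  left_inv p := by
    have h := gq_ne_zero p t
    refine Prod.ext ?_ (Subtype.ext ?_)
    · simp only [movI', gq_movI]; simp only [movI]; field_simp; ring
    · simp only [movI', gq_movI]; simp only [movI]; field_simp
  right_inv p := by
    have h := gq_ne_zero p 0
    refine Prod.ext ?_ (Subtype.ext ?_)
    · simp only [movI, gq_movI']; simp only [movI']; field_simp; ring
    · simp only [movI, gq_movI']; simp only [movI']; field_simp

/-- The action of `z ↦ 1/(z - t)` on the conic, viewed as `K ∪ {∞}` with `∞ = none`. -/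
def movP (t : K) : Option K ≃ Option K where
  toFun P := match P with
    | none => some 0
    | some s => if s = t then none else some (1 / (s - t))
  invFun P := match P with
    | none => some t
    | some s => if s = 0 then none else some (1 / s + t)
  left_inv P := by
    cases P with
    | none => simp
    | some s =>
      by_cases h : s = t
      · simp [h]
      · have : s - t ≠ 0 := sub_ne_zero.2 h
        simp [h, this]
  right_inv P := by
    cases P with
    | none => simp
    | some s =>
      by_cases h : s = 0
      · simp [h]
      · simp [h]

lemma beta_movI (t : K) (p r : IC K) :
    beta (movI t p) (movI t r) * (gq p t * gq r t) = beta p r := by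
  have h := gq_ne_zero p t
  have h' := gq_ne_zero r t
  have e : beta (movI t p) (movI t r) = gq p t / gq p t ^ 2 + gq r t / gq r t ^ 2
      - 2 * (p.1 - t) * (r.1 - t) / (gq p t * gq r t) := by
    rw [show gq p t / gq p t ^ 2 = ((t - p.1) ^ 2 - p.2) / gq p t ^ 2 from rfl,
      show gq r t / gq r t ^ 2 = ((t - r.1) ^ 2 - r.2) / gq r t ^ 2 from rfl]
    simp only [beta, movI]; field_simp; ring
  rw [e]; field_simp; simp only [gq, beta]; ring

/-- Any conic point `P` can be moved to infinity by a symmetry of the conic. Horocycle coordinates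
get multiplied by fourth powers, and by `1` at `P` itself. -/
lemma transport (P : Option K) : ∃ (gI : IC K ≃ IC K) (gP : Option K ≃ Option K) (μ : Option K → K),
    gP P = none ∧ μ P = 1 ∧ (∀ P', ∃ w, w ≠ 0 ∧ μ P' = w ^ 4) ∧
    (∀ p P', hor (gI p) (gP P') = μ P' * hor p P') ∧
    ∀ p r, beta (gI p) (gI r) = 0 ↔ beta p r = 0 := by
  cases P with
  | none => exact ⟨Equiv.refl _, Equiv.refl _, fun _ => 1, rfl, rfl,
      fun _ => ⟨1, one_ne_zero, by simp⟩, by simp, by simp⟩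
  | some t =>
    refine ⟨movIE t, movP t, fun P => match P with
      | none => 1
      | some s => if s = t then 1 else (s - t) ^ 4, by simp [movP], by simp, ?_, ?_, ?_⟩
    · intro P'
      cases P' with
      | none => exact ⟨1, one_ne_zero, by simp⟩
      | some s =>
        by_cases h : s = t
        · exact ⟨1, one_ne_zero, by simp [h]⟩
        · exact ⟨s - t, sub_ne_zero.2 h, by simp [h]⟩
    · intro p P'
      have hg := gq_ne_zero p t
      cases P' with
      | none =>
        simp only [movP, movIE, Equiv.coe_fn_mk, hor, gq_movI]
        simp only [movI]; field_simp
      | some s =>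
        by_cases h : s = t
        · subst h; simp [movP, movIE, hor, movI]
        · have hs : s - t ≠ 0 := sub_ne_zero.2 h
          have hgs := gq_ne_zero p s
          have key : gq (movI t p) (1 / (s - t)) = gq p s / ((s - t) ^ 2 * gq p t) := by
            have : gq (movI t p) (1 / (s - t)) = (gq p t ^ 2 - 2 * (p.1 - t) * (s - t) * gq p t
                + (s - t) ^ 2 * gq p t) / ((s - t) ^ 2 * gq p t ^ 2) := by
              rw [show (s - t) ^ 2 * gq p t = (s - t) ^ 2 * ((t - p.1) ^ 2 - p.2) from rfl]
              simp only [movI]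
              rw [gq]; field_simp; ring
            rw [this]; field_simp; simp only [gq]; ring
          simp only [movP, movIE, Equiv.coe_fn_mk, h, if_false, hor, key]
          simp only [movI]; field_simp
    · intro p r
      rw [← beta_movI t p r]
      simp [gq_ne_zero, movIE]

/-! ### Parity lemmas -/

/-- Modulo `2`, only the fixed points of an involution count. -/
lemma sum_invol {α : Type} [Fintype α] (σ : α → α) (hσ : ∀ x, σ (σ x) = x) (Pr : α → Prop)
    (hP : ∀ x, Pr x → Pr (σ x)) :
    ∑ x, (if Pr x then (1 : ZMod 2) else 0) = ∑ x, if Pr x ∧ σ x = x then (1 : ZMod 2) else 0 := by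
  have hP' : ∀ x, Pr (σ x) ↔ Pr x := fun x => ⟨fun h => by simpa [hσ] using hP _ h, hP x⟩
  rw [← sub_eq_zero, ← Finset.sum_sub_distrib]
  refine Finset.sum_involution (fun x _ => σ x) ?_ ?_ (by simp) (fun x _ => hσ x)
  · intro x _
    have e : (σ (σ x) = σ x) ↔ (σ x = x) := by rw [hσ]; exact eq_comm
    simp only [hP', e]
    exact CharTwo.add_self_eq_zero _
  · intro x _ hx hs
    apply hx; simp [hs]

lemma sum_reflect (h2 : (2 : K) ≠ 0) (c : K) (Pr : K → Prop)
    (hP : ∀ x, Pr x → Pr (c - x)) :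
    ∑ x, (if Pr x then (1 : ZMod 2) else 0) = if Pr (c / 2) then 1 else 0 := by
  rw [sum_invol (fun x => c - x) (by simp) Pr hP]
  have : ∀ x, (Pr x ∧ c - x = x) ↔ (c / 2 = x ∧ Pr (c / 2)) := by
    intro x
    have : c - x = x ↔ c / 2 = x := by
      rw [div_eq_iff h2]
      constructor <;> intro h <;> linear_combination h
    rw [this]
    constructor
    · rintro ⟨h, h'⟩; exact ⟨h', h' ▸ h⟩
    · rintro ⟨h, h'⟩; exact ⟨h ▸ h', h⟩
  simp only [this, ite_and]
  simp

/-- A nonzero binary quadratic form has an odd number of zeros on the projective line exactly when its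
discriminant vanishes; the first summand counts the zero at infinity. -/
lemma binary_form_parity (h2 : (2 : K) ≠ 0) (α β γ : K)
    (h : ¬ (α = 0 ∧ β = 0 ∧ γ = 0)) :
    ((if α = 0 then 1 else 0) + ∑ t : K, (if α * t ^ 2 + β * t + γ = 0 then (1 : ZMod 2) else 0))
      = if β ^ 2 = 4 * α * γ then 1 else 0 := by
  by_cases hα : α = 0
  · subst hα
    by_cases hβ : β = 0
    · subst hβ
      simp at h
      simp [h]
    · have : ∀ t : K, (0 * t ^ 2 + β * t + γ = 0) ↔ (-γ / β = t) := by
        intro t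
        rw [div_eq_iff hβ]
        constructor <;> intro h <;> linear_combination -h
      simp only [this]
      simp [hβ]
      exact CharTwo.add_self_eq_zero _
  · rw [sum_reflect h2 (-β / α) (fun t => α * t ^ 2 + β * t + γ = 0)]
    · have : (α * (-β / α / 2) ^ 2 + β * (-β / α / 2) + γ = 0) ↔ β ^ 2 = 4 * α * γ := by
        have : α * (-β / α / 2) ^ 2 + β * (-β / α / 2) + γ = -(β ^ 2 - 4 * α * γ) / (2 ^ 2 * α) := by
          field_simp; ring
        rw [this, div_eq_zero_iff, neg_eq_zero, sub_eq_zero]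
        simp [h2, hα]
      simp [this, hα]
    · intro t ht
      rw [← ht]; field_simp; ring

/-! ### Sums over internal points -/

/-- The incidence matrix of internal points and horocycles `(P, ω)`. -/
def Phi (K : Type) [Field K] : Matrix (IC K) (Option K × Nsq K) (ZMod 2) :=
  Matrix.of fun p c => if hor p c.1 = c.2 then 1 else 0

/-- A polar line meets the horocycle `(P, ω)` in an odd number of points exactly when its pole lies on
the horocycle `(P, -ω)`. With `P` at infinity, the intersection is symmetric under a reflection. -/
lemma sum_beta_hor (h2 : (2 : K) ≠ 0) (p : IC K) (P : Option K) (ω : Nsq K) :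
    ∑ r : IC K, (if beta p r = 0 then (1 : ZMod 2) else 0) * (if hor r P = ω then 1 else 0)
      = if hor p P = -ω then 1 else 0 := by
  obtain ⟨gI, gP, μ, h1, h3, -, h4, h5⟩ := transport P
  have e : ∀ r, hor r P = (gI r).2 := by
    intro r
    have := h4 r P
    rw [h1, h3, one_mul] at this
    exact this.symm
  have e2 : ∀ r, (beta p r = 0) = (beta (gI p) (gI r) = 0) := fun r => propext (h5 p r).symm
  simp only [e, e2]
  rw [gI.sum_comp (fun r => (if beta (gI p) r = 0 then (1 : ZMod 2) else 0) *
    (if (r.2 : K) = ω then 1 else 0))]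
  generalize gI p = s
  rw [Fintype.sum_prod_type]
  simp only [Subtype.coe_inj, mul_ite, mul_one, mul_zero]
  simp only [Finset.sum_ite_eq', Finset.mem_univ, if_true]
  rw [sum_reflect h2 (2 * s.1) (fun x => beta s (x, ω) = 0)]
  · have : (beta s (2 * s.1 / 2, ω) = 0) ↔ (s.2 : K) = -ω := by
      rw [mul_div_cancel_left₀ _ h2]
      simp only [beta]
      constructor <;> intro h <;> linear_combination -h
    simp only [this]
  · intro x hx
    rw [← hx]; simp only [beta]; ring

/-- A horocycle has `q` points, and distinct horocycles with the same centre are disjoint. -/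
lemma sum_hor_hor_self (hK : Odd (Fintype.card K)) (P : Option K) (ω ω' : Nsq K) :
    ∑ p : IC K, (if hor p P = ω then (1 : ZMod 2) else 0) * (if hor p P = ω' then 1 else 0)
      = if ω = ω' then 1 else 0 := by
  obtain ⟨gI, gP, μ, h1, h3, -, h4, h5⟩ := transport P
  have e : ∀ r, hor r P = (gI r).2 := by
    intro r
    have := h4 r P
    rw [h1, h3, one_mul] at this
    exact this.symm
  simp only [e]
  rw [gI.sum_comp (fun r => (if (r.2 : K) = ω then (1 : ZMod 2) else 0) *
    (if (r.2 : K) = ω' then 1 else 0))]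
  rw [Fintype.sum_prod_type]
  simp only [Subtype.coe_inj, mul_ite, mul_one, mul_zero]
  simp only [Finset.sum_ite_eq', Finset.mem_univ, if_true]
  rw [Finset.sum_const, Finset.card_univ, nsmul_eq_mul, (ZMod.natCast_eq_one_iff_odd).2 hK, one_mul]
  simp only [eq_comm]

/-- The parity of the intersection of two horocycles with different centres `P`, `P'`. -/
lemma sum_hor_hor_ne (h2 : (2 : K) ≠ 0) {P P' : Option K} (hP : P ≠ P') :
    ∃ κ : K, (∃ w, w ≠ 0 ∧ κ = w ^ 4) ∧ ∀ ω ω' : Nsq K,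
    ∑ p : IC K, (if hor p P = ω then (1 : ZMod 2) else 0) * (if hor p P' = ω' then 1 else 0)
      = if (ω : K) * ω' * κ = 1 then 1 else 0 := by
  obtain ⟨gI, gP, μ, h1, h3, h6, h4, h5⟩ := transport P
  refine ⟨μ P', h6 P', fun ω ω' => ?_⟩
  obtain ⟨w, hw, hμ⟩ := h6 P'
  have hμ0 : μ P' ≠ 0 := by rw [hμ]; positivity
  have e : ∀ r, hor r P = (gI r).2 := by
    intro r
    have := h4 r P
    rw [h1, h3, one_mul] at this
    exact this.symm
  have hg : gP P' ≠ none := fun h => hP (gP.injective (h1.trans h.symm))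
  obtain ⟨t, ht⟩ := Option.ne_none_iff_exists'.1 hg
  have e2 : ∀ r, (hor r P' = ω') = (hor (gI r) (some t) = μ P' * ω') := by
    intro r
    rw [← ht, h4, mul_right_inj' hμ0]
  simp only [e, e2]
  rw [gI.sum_comp (fun r => (if (r.2 : K) = ω then (1 : ZMod 2) else 0) *
    (if hor r (some t) = μ P' * ω' then 1 else 0))]
  rw [Fintype.sum_prod_type]
  simp only [Subtype.coe_inj, ite_mul, one_mul, zero_mul]
  simp only [Finset.sum_ite_eq', Finset.mem_univ, if_true]
  rw [sum_reflect h2 (2 * t) (fun x => hor (x, ω) (some t) = μ P' * ω')]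
  · have : (hor (2 * t / 2, ω) (some t) = μ P' * ω') ↔ (ω : K) * ω' * μ P' = 1 := by
      have h0 := ω.ne_zero
      rw [mul_div_cancel_left₀ _ h2]
      simp only [hor, gq, sub_self]
      rw [div_eq_iff (by simpa using h0)]
      constructor
      · intro h
        apply mul_left_cancel₀ h0
        linear_combination -h
      · intro h
        linear_combination -(ω : K) * h
    simp only [this]
  · intro x hx
    rw [← hx]
    have : gq (2 * t - x, ω) t = gq (x, ω) t := by simp only [gq]; ring
    simp only [hor, this]

/-! ### Sums over conic points -/

/-- The parity of the number of conic points at which the horocycle coordinates of `p` and `r` have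
ratio `l`. Writing `p.2 = d² l r.2`, these points are the zeros of the two binary quadratic forms
`gq p ∓ d gq r`, so `binary_form_parity` reduces the claim to their discriminants. -/
lemma sum_ratio (h2 : (2 : K) ≠ 0) (hm : ¬ IsSquare (-1 : K))
    (hmul : ∀ a b : K, ¬ IsSquare a → ¬ IsSquare b → IsSquare (a * b))
    (p r : IC K) (l : K) (hl : IsSquare l) (hl0 : l ≠ 0)
    (hpr : ¬ (p = r ∧ l = 1)) :
    ∑ P, (if hor p P = l * hor r P then (1 : ZMod 2) else 0)
      = if beta p r ^ 2 = p.2 * r.2 * (l + 2 + 1 / l) then 1 else 0 := by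
  obtain ⟨a, n⟩ := p
  obtain ⟨a', n'⟩ := r
  have hn := n.ne_zero
  have hn' := n'.ne_zero
  obtain ⟨d, hd⟩ : ∃ d : K, (n : K) = d ^ 2 * l * n' := by
    obtain ⟨x, hx⟩ := hmul n n' n.2 n'.2
    obtain ⟨y, rfl⟩ := hl
    have : y ≠ 0 := by rintro rfl; simp at hl0
    exact ⟨x / (y * n'), by field_simp; linear_combination hx⟩
  have hd0 : d ≠ 0 := by rintro rfl; simp at hd; exact hn hd
  have hl1 : l ≠ -1 := by rintro rfl; exact hm hl
  have hor_iff : ∀ t : K, hor (a, n) (some t) = l * hor (a', n') (some t) ↔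
      (gq (a, n) t = d * gq (a', n') t ∨ gq (a, n) t = -d * gq (a', n') t) := by
    intro t
    have g0 := gq_ne_zero (a, n) t
    have g0' := gq_ne_zero (a', n') t
    simp only [hor]
    rw [← mul_div_assoc, div_eq_div_iff (by positivity) (by positivity)]
    rw [neg_mul, ← sq_eq_sq_iff_eq_or_eq_neg]
    constructor
    · intro h
      apply mul_left_cancel₀ (mul_ne_zero hl0 hn')
      linear_combination -h + gq (a', n') t ^ 2 * hd
    · intro h
      linear_combination - (l * n') * h + gq (a', n') t ^ 2 * hd
  have split : ∀ t : K, (if hor (a, n) (some t) = l * hor (a', n') (some t) then (1 : ZMod 2) else 0)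
      = (if gq (a, n) t = d * gq (a', n') t then 1 else 0) +
        (if gq (a, n) t = -d * gq (a', n') t then 1 else 0) := by
    intro t
    rw [if_congr (hor_iff t) rfl rfl]
    by_cases h1 : gq (a, n) t = d * gq (a', n') t
    · have : ¬ gq (a, n) t = -d * gq (a', n') t := by
        intro h
        have : 2 * gq (a, n) t = 0 := by linear_combination h1 + h
        simp [h2, gq_ne_zero] at this
      rw [if_pos (Or.inl h1), if_pos h1, if_neg this, add_zero]
    · simp [h1]
  have inf : (if hor (a, n) none = l * hor (a', n') none then (1 : ZMod 2) else 0)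
      = (if 1 - d = 0 then 1 else 0) + (if 1 - (-d) = 0 then 1 else 0) := by
    have : hor (a, n) none = l * hor (a', n') none ↔ (1 - d = 0 ∨ 1 - (-d) = 0) := by
      simp only [hor]
      rw [← mul_eq_zero]
      constructor
      · intro h
        apply mul_left_cancel₀ (mul_ne_zero hl0 hn')
        linear_combination hd - h
      · intro h
        linear_combination hd - l * n' * h
    rw [if_congr this rfl rfl]
    by_cases h1 : 1 - d = 0
    · have : ¬ 1 - (-d) = 0 := by
        intro h
        apply h2; linear_combination h1 + h
      rw [if_pos (Or.inl h1), if_pos h1, if_neg this, add_zero]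
    · simp [h1]
  have quad : ∀ e : K, e ^ 2 * l * n' = n →
      (if 1 - e = 0 then 1 else 0) +
        ∑ t : K, (if gq (a, n) t = e * gq (a', n') t then (1 : ZMod 2) else 0)
      = if (n : K) * (1 + 1 / l) + e * beta (a, n) (a', n') = 0 then 1 else 0 := by
    intro e he
    have he' : e ^ 2 * n' = n * (1 / l) := by field_simp; linear_combination he
    have hz : ¬ (1 - e = 0 ∧ -2 * (a - e * a') = 0 ∧ a ^ 2 - n - e * (a' ^ 2 - n') = 0) := by
      rintro ⟨h1, h3, h4⟩
      have : e = 1 := by linear_combination -h1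
      subst this
      have ha : a = a' := by
        have : a - 1 * a' = 0 := by simpa [h2] using h3
        linear_combination this
      subst ha
      have : (n : K) = n' := by linear_combination -h4
      apply hpr
      refine ⟨Prod.ext rfl (Subtype.ext this), ?_⟩
      rw [this] at he
      apply mul_right_cancel₀ hn'
      linear_combination he
    have := binary_form_parity h2 _ _ _ hz
    have c1 : ∀ t : K, ((1 - e) * t ^ 2 + -2 * (a - e * a') * t + (a ^ 2 - n - e * (a' ^ 2 - n')) = 0)
        ↔ gq (a, n) t = e * gq (a', n') t := by
      intro t
      simp only [gq]
      constructor <;> intro h <;> linear_combination h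
    have c2 : ((-2 * (a - e * a')) ^ 2 = 4 * (1 - e) * (a ^ 2 - n - e * (a' ^ 2 - n'))) ↔
        (n : K) * (1 + 1 / l) + e * beta (a, n) (a', n') = 0 := by
      rw [mul_add, mul_one, ← he']
      simp only [beta]
      have h4 : (4 : K) ≠ 0 := by
        rw [show (4 : K) = 2 * 2 by norm_num]; exact mul_ne_zero h2 h2
      constructor
      · intro h
        apply mul_left_cancel₀ h4
        linear_combination h
      · intro h
        linear_combination 4 * h
    simp only [c1, c2] at this
    exact this
  rw [Fintype.sum_option, inf]
  simp only [split, Finset.sum_add_distrib]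
  rw [add_add_add_comm, quad d (by rw [hd]), quad (-d) (by rw [hd]; ring)]
  have hA : (n : K) * (1 + 1 / l) ≠ 0 := by
    refine mul_ne_zero hn ?_
    intro h
    apply hl1
    field_simp at h
    linear_combination h
  have hB : (beta (a, n) (a', n') ^ 2 = (n : K) * n' * (l + 2 + 1 / l)) ↔
      ((n : K) * (1 + 1 / l) + d * beta (a, n) (a', n') = 0 ∨
        (n : K) * (1 + 1 / l) + -d * beta (a, n) (a', n') = 0) := by
    rw [← mul_eq_zero]
    generalize beta (a, n) (a', n') = b
    rw [hd]
    field_simp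
    constructor
    · intro h
      linear_combination (-d ^ 2) * h
    · intro h
      apply mul_left_cancel₀ (pow_ne_zero 2 hd0)
      linear_combination -h
  rw [if_congr hB rfl rfl]
  by_cases h1 : (n : K) * (1 + 1 / l) + d * beta (a, n) (a', n') = 0
  · have : ¬ (n : K) * (1 + 1 / l) + -d * beta (a, n) (a', n') = 0 := by
      intro h
      have : 2 * ((n : K) * (1 + 1 / l)) = 0 := by linear_combination h + h1
      exact (mul_ne_zero h2 hA) this
    rw [if_pos h1, if_neg this, if_pos (Or.inl h1), add_zero]
  · rw [if_neg h1, zero_add]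
    simp only [h1, false_or]

/-! ### Squares -/

lemma nonsq_mul_nonsq (a b : K) (ha : ¬ IsSquare a) (hb : ¬ IsSquare b) : IsSquare (a * b) := by
  have h2 : ringChar K ≠ 2 := fun h => ha (FiniteField.isSquare_of_char_two h a)
  have ha' := (quadraticChar_neg_one_iff_not_isSquare (F := K)).2 ha
  have hb' := (quadraticChar_neg_one_iff_not_isSquare (F := K)).2 hb
  by_contra h
  have := (quadraticChar_neg_one_iff_not_isSquare (F := K)).2 h
  rw [map_mul, ha', hb'] at this
  norm_num at this

lemma two_ne_zero_of_odd (hq : Odd (Fintype.card K)) : (2 : K) ≠ 0 := by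
  apply Ring.two_ne_zero
  intro h
  have := FiniteField.even_card_iff_char_two.1 h
  rw [Nat.odd_iff] at hq
  omega

lemma card_Nsq (hq : Odd (Fintype.card K)) :
    2 * Fintype.card (Nsq K) + 1 = Fintype.card K := by
  have h2 : ringChar K ≠ 2 := by
    intro h
    have := FiniteField.even_card_iff_char_two.1 h
    rw [Nat.odd_iff] at hq
    omega
  have key : ∀ a : K, (1 : ℤ) = quadraticChar K a + (if a = 0 then 1 else 0)
      + 2 * (if ¬ IsSquare a then 1 else 0) := by
    intro a
    by_cases h0 : a = 0
    · subst h0; simp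
    · by_cases hs : IsSquare a
      · rw [(quadraticChar_one_iff_isSquare h0).2 hs]; simp [h0, hs]
      · rw [quadraticChar_neg_one_iff_not_isSquare.2 hs]; simp [h0, hs]
  have h := Finset.sum_congr (rfl : (Finset.univ : Finset K) = Finset.univ) (fun a _ => key a)
  rw [Finset.sum_add_distrib, Finset.sum_add_distrib, quadraticChar_sum_zero h2,
    ← Finset.mul_sum] at h
  have hN : ∑ a : K, (if ¬ IsSquare a then (1 : ℤ) else 0) = Fintype.card (Nsq K) := by
    rw [Finset.sum_boole, Fintype.card_subtype]
  have h1 : ∑ a : K, (if a = 0 then (1 : ℤ) else 0) = 1 := by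
    rw [Finset.sum_ite_eq' Finset.univ (0 : K)]; simp
  rw [hN, h1, Finset.sum_const, Finset.card_univ, nsmul_eq_mul, mul_one] at h
  omega

/-! ### The square of the incidence matrix -/

/-- Diagonal of `A²`: reflecting in the first coordinate of `p` pairs off the points of the polar line. -/
lemma sum_beta_beta_self (h2 : (2 : K) ≠ 0) (hm : ¬ IsSquare (-1 : K)) (p : IC K) :
    ∑ s, (if beta p s = 0 then (1 : ZMod 2) else 0) * (if beta s p = 0 then 1 else 0) = 0 := by
  have : ∀ s, (if beta p s = 0 then (1 : ZMod 2) else 0) * (if beta s p = 0 then 1 else 0)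
      = if beta p s = 0 then 1 else 0 := by
    intro s
    rw [beta_comm s p]
    split_ifs <;> simp
  simp only [this]
  rw [sum_invol (fun s : IC K => (2 * p.1 - s.1, s.2))]
  · apply Finset.sum_eq_zero
    rintro ⟨x, y⟩ -
    rw [if_neg]
    rintro ⟨h1, h3⟩
    have h3 : 2 * p.1 - x = x := congrArg Prod.fst h3
    have hx : p.1 = x := mul_left_cancel₀ h2 (by linear_combination h3)
    simp only [beta, hx] at h1
    have := nonsq_mul_nonsq _ _ p.2.2 hm
    exact y.2 (by convert this using 1; linear_combination -h1)
  · rintro ⟨x, y⟩; simp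
  · rintro ⟨x, y⟩ h
    rw [← h]; simp only [beta]; ring

/-- Off-diagonal entries of `A²`: two distinct polar lines meet in a single point, and the condition
says whether that point is internal. -/
lemma sum_beta_beta (h2 : (2 : K) ≠ 0) (p r : IC K) (hpr : p ≠ r) :
    ∑ s, (if beta p s = 0 then (1 : ZMod 2) else 0) * (if beta s r = 0 then 1 else 0)
      = if IsSquare (beta p r ^ 2 - 4 * p.2 * r.2) then 0 else 1 := by
  obtain ⟨a, n⟩ := p
  obtain ⟨a', n'⟩ := r
  have im : ∀ s, (if beta (a, n) s = 0 then (1 : ZMod 2) else 0) *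
      (if beta s (a', n') = 0 then 1 else 0)
      = if beta (a, n) s = 0 ∧ beta s (a', n') = 0 then (1 : ZMod 2) else 0 := by
    intro s
    split_ifs <;> simp_all
  simp only [im]
  by_cases ha : a = a'
  · subst ha
    rw [if_pos ⟨(n : K) - n', by simp only [beta]; ring⟩]
    apply Finset.sum_eq_zero
    rintro ⟨x, y⟩ -
    rw [if_neg]
    rintro ⟨h1, h3⟩
    apply hpr
    simp only [beta] at h1 h3
    exact Prod.ext rfl (Subtype.ext (by simp only; linear_combination -h1 + h3))
  · have hd : a' - a ≠ 0 := sub_ne_zero.2 (Ne.symm ha)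
    set x₀ : K := a + (n - n' + (a' - a) ^ 2) / (2 * (a' - a)) with hx₀
    set y₀ : K := (x₀ - a) ^ 2 - n with hy₀
    have sol : ∀ s : IC K, (beta (a, n) s = 0 ∧ beta s (a', n') = 0) ↔ (s.1 = x₀ ∧ (s.2 : K) = y₀) := by
      rintro ⟨x, y⟩
      simp only [beta]
      have hx : 2 * (a' - a) * (x₀ - a) = n - n' + (a' - a) ^ 2 := by
        rw [hx₀]; field_simp; ring
      constructor
      · rintro ⟨h1, h3⟩
        have : x = x₀ := by
          apply mul_left_cancel₀ (mul_ne_zero h2 hd)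
          linear_combination h1 - h3 - hx
        refine ⟨this, ?_⟩
        rw [hy₀, ← this]; linear_combination -h1
      · rintro ⟨rfl, h3⟩
        rw [h3, hy₀]
        constructor
        · ring
        · linear_combination -hx
    have hsq : IsSquare (beta (a, n) (a', n') ^ 2 - 4 * n * n') ↔ IsSquare y₀ := by
      have : beta (a, n) (a', n') ^ 2 - 4 * n * n' = y₀ * (2 * (a' - a)) ^ 2 := by
        rw [hy₀, hx₀]; simp only [beta]; field_simp; ring
      rw [this]
      constructor
      · rintro ⟨c, hc⟩
        refine ⟨c / (2 * (a' - a)), ?_⟩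
        field_simp
        linear_combination hc
      · intro h
        exact h.mul (IsSquare.sq _)
    simp only [sol, hsq]
    by_cases hy : IsSquare y₀
    · rw [if_pos hy]
      apply Finset.sum_eq_zero
      rintro ⟨x, y⟩ -
      rw [if_neg]
      rintro ⟨-, h⟩
      exact y.2 (h ▸ hy)
    · rw [if_neg hy]
      rw [Finset.sum_eq_single ((x₀, ⟨y₀, hy⟩) : IC K)]
      · simp
      · rintro ⟨x, y⟩ - h
        rw [if_neg]
        rintro ⟨h1, h3⟩
        exact h (Prod.ext h1 (Subtype.ext h3))
      · simp

/-- The Gram determinant of two distinct internal points is nonzero, because the line joining them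
is not a tangent. -/
lemma eq_of_tangent (p r : IC K) (h : beta p r ^ 2 = 4 * p.2 * r.2) : p = r := by
  obtain ⟨a, n⟩ := p
  obtain ⟨a', n'⟩ := r
  obtain ⟨m, hm⟩ := nonsq_mul_nonsq _ _ n.2 n'.2
  obtain ⟨m, hm, hb⟩ : ∃ m : K, n * n' = m * m ∧ beta (a, n) (a', n') = 2 * m := by
    have : beta (a, n) (a', n') ^ 2 = (2 * m) ^ 2 := by
      rw [h]; linear_combination 4 * hm
    rcases sq_eq_sq_iff_eq_or_eq_neg.1 this with h | h
    · exact ⟨m, hm, h⟩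
    · exact ⟨-m, by rw [hm]; ring, by rw [h]; ring⟩
  have e : (n : K) * (a - a') ^ 2 = (n + m) ^ 2 := by
    simp only [beta] at hb
    linear_combination (n : K) * hb + hm
  have ha : a - a' = 0 := by
    by_contra ha
    apply nonsq_mul_sq n.2 ha
    rw [e]; exact IsSquare.sq _
  have hmn : (n : K) + m = 0 := by
    rw [ha] at e
    have : ((n : K) + m) ^ 2 = 0 := by rw [← e]; ring
    exact pow_eq_zero_iff two_ne_zero |>.1 this
  refine Prod.ext (sub_eq_zero.1 ha) (Subtype.ext ?_)
  apply mul_left_cancel₀ n.ne_zero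
  simp only
  linear_combination -hm + ((n : K) - m) * hmn

/-- The condition `e l < e l⁻¹` selects one element from each pair `{l, l⁻¹}` with `l ≠ l⁻¹`. The
solutions `l` of the equation in `sum_ratio` form such a pair of squares when the Gram
determinant of `p` and `r` is a square, and otherwise no square solves it. -/
lemma sum_mem_half (h2 : (2 : K) ≠ 0) (hm : ¬ IsSquare (-1 : K)) (e : K → ℕ)
    (he : Function.Injective e) (p r : IC K) (hpr : p ≠ r) :
    ∑ P, (if e (hor p P / hor r P) < e (hor p P / hor r P)⁻¹ then (1 : ZMod 2) else 0)
      = if IsSquare (beta p r ^ 2 - 4 * p.2 * r.2) then 1 else 0 := by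
  have h4 : (4 : K) ≠ 0 := by
    rw [show (4 : K) = 2 * 2 by norm_num]; exact mul_ne_zero h2 h2
  have s1 : ∀ P, (if e (hor p P / hor r P) < e (hor p P / hor r P)⁻¹ then (1 : ZMod 2) else 0)
      = ∑ l, if (IsSquare l ∧ l ≠ 0 ∧ e l < e l⁻¹) then
        (if hor p P = l * hor r P then (1 : ZMod 2) else 0) else 0 := by
    intro P
    have h0 := hor_ne_zero r P
    have h0' := hor_ne_zero p P
    have hs : IsSquare (hor p P / hor r P) := by
      obtain ⟨c, hc⟩ := nonsq_mul_nonsq _ _ (hor_nonsq p P) (hor_nonsq r P)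
      exact ⟨c / hor r P, by field_simp; linear_combination hc⟩
    have : ∀ l, (hor p P = l * hor r P) ↔ l = hor p P / hor r P := by
      intro l; rw [eq_div_iff h0, eq_comm]
    simp only [this]
    rw [Finset.sum_eq_single (hor p P / hor r P)]
    · simp only [hs, ne_eq, div_eq_zero_iff, h0, h0', or_self, not_false_eq_true, true_and, if_true]
    · intro b _ hb; simp [hb]
    · simp
  simp only [s1]
  rw [Finset.sum_comm]
  have s2 : ∀ l, (∑ P, if (IsSquare l ∧ l ≠ 0 ∧ e l < e l⁻¹) then
        (if hor p P = l * hor r P then (1 : ZMod 2) else 0) else 0) =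
      if (IsSquare l ∧ l ≠ 0 ∧ e l < e l⁻¹) ∧ beta p r ^ 2 = p.2 * r.2 * (l + 2 + 1 / l)
        then 1 else 0 := by
    intro l
    by_cases h : IsSquare l ∧ l ≠ 0 ∧ e l < e l⁻¹
    · simp only [h, if_true, true_and, not_false_eq_true, ne_eq]
      exact sum_ratio h2 hm nonsq_mul_nonsq p r l h.1 h.2.1 (fun h => hpr h.1)
    · simp only [h, if_false, false_and, Finset.sum_const_zero]
  simp only [s2]
  obtain ⟨m, hmm⟩ := nonsq_mul_nonsq _ _ p.2.2 r.2.2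
  have hm0 : m ≠ 0 := by
    rintro rfl
    simp [p.2.ne_zero, r.2.ne_zero] at hmm
  have hpr0 := mul_ne_zero p.2.ne_zero r.2.ne_zero
  by_cases hs : IsSquare (beta p r ^ 2 - 4 * p.2 * r.2)
  · rw [if_pos hs]
    obtain ⟨s, hs⟩ := hs
    have hs0 : s ≠ 0 := by
      rintro rfl
      exact hpr (eq_of_tangent p r (by linear_combination hs))
    generalize beta p r = b at *
    set y : K := (b + s) / (2 * m) with hy
    set z : K := (b - s) / (2 * m) with hz
    have hyz : y * z = 1 := by
      rw [hy, hz]; field_simp; linear_combination hs + 4 * hmm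
    have hb : b = m * (y + z) := by rw [hy, hz]; field_simp; ring
    have hys : s = m * (y - z) := by rw [hy, hz]; field_simp; ring
    clear_value y z
    have hy0 : y ≠ 0 := by rintro rfl; simp at hyz
    have hz0 : z ≠ 0 := by rintro rfl; simp at hyz
    have hyi : (y ^ 2)⁻¹ = z ^ 2 := by
      rw [← inv_pow, inv_eq_of_mul_eq_one_right hyz]
    have hzi : (z ^ 2)⁻¹ = y ^ 2 := by rw [← hyi, inv_inv]
    have hne : y ^ 2 ≠ z ^ 2 := by
      intro h
      rcases sq_eq_sq_iff_eq_or_eq_neg.1 h with h | h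
      · apply hs0; rw [hys, h]; ring
      · exact hm ⟨y, by rw [h] at hyz; rw [h]; linear_combination hyz⟩
    have sol : ∀ l : K, l ≠ 0 → (b ^ 2 = p.2 * r.2 * (l + 2 + 1 / l) ↔ l = y ^ 2 ∨ l = z ^ 2) := by
      intro l hl
      rw [hmm, hb, ← sub_eq_zero (a := l), ← sub_eq_zero (a := l) (b := z ^ 2), ← mul_eq_zero]
      field_simp
      constructor
      · intro h
        apply mul_left_cancel₀ (pow_ne_zero 2 hm0)
        linear_combination -m ^ 2 * h + m ^ 2 * (y * z + 1 + 2 * l) * hyz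
      · intro h
        linear_combination -h + (y * z + 1 + 2 * l) * hyz
    have hlt : e (y ^ 2) < e (z ^ 2) ∨ e (z ^ 2) < e (y ^ 2) :=
      lt_or_gt_of_ne (fun h => hne (he h))
    have fin : ∀ u v : K, u ≠ 0 → v ≠ 0 → (u ^ 2)⁻¹ = v ^ 2 → (v ^ 2)⁻¹ = u ^ 2 →
        e (u ^ 2) < e (v ^ 2) →
        (∀ l : K, l ≠ 0 → (b ^ 2 = p.2 * r.2 * (l + 2 + 1 / l) ↔ l = u ^ 2 ∨ l = v ^ 2)) →
        ∑ l, (if (IsSquare l ∧ l ≠ 0 ∧ e l < e l⁻¹) ∧ b ^ 2 = p.2 * r.2 * (l + 2 + 1 / l)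
          then (1 : ZMod 2) else 0) = 1 := by
      intro u v hu hv hui hvi hlt sol
      rw [Finset.sum_eq_single (u ^ 2)]
      · rw [if_pos]
        exact ⟨⟨IsSquare.sq u, pow_ne_zero 2 hu, by rwa [hui]⟩, (sol _ (pow_ne_zero 2 hu)).2 (Or.inl rfl)⟩
      · intro l _ hl
        rw [if_neg]
        rintro ⟨⟨_, h0, h3⟩, h5⟩
        rcases (sol l h0).1 h5 with h | h
        · exact hl h
        · rw [h, hvi] at h3; omega
      · simp
    rcases hlt with h | h
    · exact fin y z hy0 hz0 hyi hzi h sol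
    · exact fin z y hz0 hy0 hzi hyi h (fun l hl => (sol l hl).trans or_comm)
  · rw [if_neg hs]
    apply Finset.sum_eq_zero
    intro l _
    rw [if_neg]
    rintro ⟨⟨⟨y, rfl⟩, h0, -⟩, h⟩
    have hy0 : y ≠ 0 := by rintro rfl; simp at h0
    apply hs
    refine ⟨m * (y - 1 / y), ?_⟩
    rw [h, mul_assoc 4, hmm]
    field_simp
    ring

/-! ### The null space when `-1` is a nonsquare -/

/-- The horocycle coordinate as an element of `Nsq K`. -/
def horN (p : IC K) (P : Option K) : Nsq K := ⟨hor p P, hor_nonsq p P⟩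

lemma Phi_apply (p : IC K) (c : Option K × Nsq K) :
    Phi K p c = if hor p c.1 = c.2 then 1 else 0 := rfl

lemma Phi_mulVec (x : Option K × Nsq K → ZMod 2) (p : IC K) :
    (Phi K).mulVec x p = ∑ P, x (P, horN p P) := by
  simp only [Matrix.mulVec, dotProduct, Phi_apply]
  rw [Fintype.sum_prod_type]
  refine Finset.sum_congr rfl fun P _ => ?_
  rw [Finset.sum_eq_single (horN p P)]
  · simp [horN]
  · intro ω _ h
    rw [if_neg, zero_mul]
    intro h'
    exact h (Subtype.ext h'.symm)
  · simp

lemma Ac_mul_Phi (h2 : (2 : K) ≠ 0) (hm : ¬ IsSquare (-1 : K)) : Ac K * Phi K = 0 := by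
  ext p ⟨P, ω⟩
  rw [Matrix.mul_apply]
  refine (sum_beta_hor h2 p P ω).trans (if_neg fun h => hor_nonsq p P ?_)
  rw [h, neg_eq_neg_one_mul]
  exact nonsq_mul_nonsq _ _ hm ω.2

lemma one_eq_Phi : (Phi K).mulVec (fun c => if c.1 = none then 1 else 0) = fun _ => 1 := by
  ext p
  rw [Phi_mulVec]
  simp

/-- Modulo `2`, the matrix `1 + A²` is the all-one matrix plus a matrix whose columns lie in the
column space of `Φ`. The all-one vector lies there as well, hence so does any vector killed by `A`. -/
lemma ker_le_range (h2 : (2 : K) ≠ 0) (hm : ¬ IsSquare (-1 : K)) (x : IC K → ZMod 2)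
    (hx : (Ac K).mulVec x = 0) : x ∈ LinearMap.range (Phi K).mulVecLin := by
  let e : K → ℕ := fun a => Fintype.equivFin K a
  have he : Function.Injective e := fun a b h => (Fintype.equivFin K).injective (Fin.ext h)
  let y : Option K × Nsq K → ZMod 2 := fun c =>
    ∑ r, (if e (c.2 / hor r c.1) < e (c.2 / hor r c.1)⁻¹ then (1 : ZMod 2) else 0) * x r
  have key : ∀ p r : IC K, (if p = r then (1 : ZMod 2) else 0) + (Ac K * Ac K) p r =
      1 + ∑ P, (if e (hor p P / hor r P) < e (hor p P / hor r P)⁻¹ then (1 : ZMod 2) else 0) := by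
    intro p r
    rw [Matrix.mul_apply]
    by_cases h : p = r
    · subst h
      rw [if_pos rfl]
      have h1 : ∀ P, (if e (hor p P / hor p P) < e (hor p P / hor p P)⁻¹
          then (1 : ZMod 2) else 0) = 0 := by
        intro P
        rw [div_self (hor_ne_zero p P), inv_one, if_neg (lt_irrefl _)]
      simp only [h1, Finset.sum_const_zero]
      exact congrArg (1 + ·) (sum_beta_beta_self h2 hm p)
    · rw [if_neg h, sum_mem_half h2 hm e he p r h, zero_add]
      refine (sum_beta_beta h2 p r h).trans ?_
      split_ifs
      · decide
      · decide
  have h1 : x = (∑ r, x r) • (fun _ => (1 : ZMod 2)) + (Phi K).mulVec y := by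
    ext p
    have h3 : ∑ r, ((if p = r then (1 : ZMod 2) else 0) + (Ac K * Ac K) p r) * x r = x p := by
      simp only [add_mul, Finset.sum_add_distrib]
      have : (Ac K * Ac K).mulVec x p = 0 := by
        rw [← Matrix.mulVec_mulVec, hx, Matrix.mulVec_zero]; rfl
      rw [show ∑ r, (Ac K * Ac K) p r * x r = 0 from this]
      simp
    rw [← h3]
    simp only [key, add_mul, Finset.sum_add_distrib, Pi.add_apply, Pi.smul_apply, one_mul,
      smul_eq_mul, mul_one, Phi_mulVec, Finset.sum_mul]
    congr 1
    rw [Finset.sum_comm]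
    rfl
  rw [h1]
  refine Submodule.add_mem _ (Submodule.smul_mem _ _ ⟨_, one_eq_Phi⟩) ⟨y, rfl⟩

lemma ker_Ac_eq (h2 : (2 : K) ≠ 0) (hm : ¬ IsSquare (-1 : K)) :
    LinearMap.ker (Ac K).mulVecLin = LinearMap.range (Phi K).mulVecLin := by
  apply le_antisymm
  · intro x hx
    exact ker_le_range h2 hm x hx
  · rintro _ ⟨y, rfl⟩
    simp [Ac_mul_Phi h2 hm]

/-- The functions on the set of horocycles which depend only on the centre `P` and whose values
at the `q + 1` centres add up to zero, parametrized by the values at the finite centres. -/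
def iota (K : Type) [Field K] [Fintype K] :
    (K → ZMod 2) →ₗ[ZMod 2] (Option K × Nsq K → ZMod 2) where
  toFun z c := match c.1 with
    | none => ∑ t, z t
    | some t => z t
  map_add' z z' := by
    ext ⟨P, ω⟩
    cases P <;> simp [Finset.sum_add_distrib]
  map_smul' a z := by
    ext ⟨P, ω⟩
    cases P <;> simp [Finset.mul_sum]

/-- The range of `iota`. -/
def V0 (K : Type) [Field K] [Fintype K] : Submodule (ZMod 2) (Option K × Nsq K → ZMod 2) :=
  LinearMap.range (iota K)

lemma finrank_V0 (ω : Nsq K) : Module.finrank (ZMod 2) (V0 K) = Fintype.card K := by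
  rw [V0, LinearMap.finrank_range_of_inj, Module.finrank_fintype_fun_eq_card]
  intro z z' h
  ext t
  exact congrFun h (some t, ω)

lemma V0_le_ker : V0 K ≤ LinearMap.ker (Phi K).mulVecLin := by
  rintro _ ⟨z, rfl⟩
  rw [LinearMap.mem_ker, Matrix.mulVecLin_apply]
  ext p
  rw [Phi_mulVec, Fintype.sum_option]
  exact CharTwo.add_self_eq_zero (∑ t, z t)

lemma mem_V0 (ω₀ : Nsq K) (x : Option K × Nsq K → ZMod 2) (hx : (Phi K).mulVec x = 0)
    (hc : ∀ P ω ω', x (P, ω) = x (P, ω')) : x ∈ V0 K := by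
  refine ⟨fun t => x (some t, ω₀), ?_⟩
  have h := congrFun hx ((0, ω₀) : IC K)
  rw [Phi_mulVec, Fintype.sum_option] at h
  have h' : x (none, ω₀) = ∑ t, x (some t, ω₀) := by
    rw [← sub_eq_zero, CharTwo.sub_eq_add]
    rw [hc none ω₀ (horN (0, ω₀) none)]
    simp only [fun t => hc (some t) ω₀ (horN (0, ω₀) (some t))]
    exact h
  ext ⟨P, ω⟩
  cases P with
  | none => rw [hc none ω ω₀, h']; rfl
  | some t => exact hc _ _ _

/-- Two distinct internal points have the same coordinate at an even number of conic points, and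
a point lies on `q + 1` horocycles. -/
lemma Phi_mul_transpose (hq : Odd (Fintype.card K)) (h2 : (2 : K) ≠ 0)
    (hm : ¬ IsSquare (-1 : K)) : Phi K * (Phi K).transpose = 0 := by
  ext p r
  rw [Matrix.mul_apply]
  have h := Phi_mulVec (fun c => Phi K r c) p
  simp only [Matrix.mulVec, dotProduct] at h
  simp only [Matrix.transpose_apply, Matrix.zero_apply]
  rw [h]
  simp only [Phi_apply, horN]
  by_cases hpr : r = p
  · subst hpr
    simp only [if_true, Finset.sum_const, Finset.card_univ, Fintype.card_option]
    obtain ⟨m, hm⟩ := hq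
    rw [hm, nsmul_eq_mul, mul_one]
    push_cast
    rw [show (2 : ZMod 2) = 0 from rfl]
    rw [zero_mul, zero_add]
    rfl
  · have := sum_ratio h2 hm nonsq_mul_nonsq r p 1 IsSquare.one one_ne_zero (fun h => hpr h.1)
    simp only [one_mul] at this
    rw [this, if_neg]
    intro h
    exact hpr (eq_of_tangent r p (by rw [h]; norm_num; ring))

/-- The kernel of `Φ` contains both the row space of `Φ` and `V0`, which meet at most in the constants. -/
lemma rank_Phi_le (hq : Odd (Fintype.card K)) (h2 : (2 : K) ≠ 0) (hm : ¬ IsSquare (-1 : K))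
    (hk : Odd (Fintype.card (Nsq K))) :
    2 * (Phi K).rank + Fintype.card K ≤ (Fintype.card K + 1) * Fintype.card (Nsq K) + 1 := by
  have hne : Nonempty (Nsq K) := Fintype.card_pos_iff.1 hk.pos
  obtain ⟨ω₀⟩ := hne
  have h1 : LinearMap.range (Phi K).transpose.mulVecLin ⊔ V0 K
      ≤ LinearMap.ker (Phi K).mulVecLin := by
    refine sup_le ?_ V0_le_ker
    rintro _ ⟨y, rfl⟩
    rw [LinearMap.mem_ker, Matrix.mulVecLin_apply, Matrix.mulVecLin_apply, Matrix.mulVec_mulVec,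
      Phi_mul_transpose hq h2 hm, Matrix.zero_mulVec]
  have h3 : LinearMap.range (Phi K).transpose.mulVecLin ⊓ V0 K
      ≤ Submodule.span (ZMod 2) {fun _ => 1} := by
    rintro _ ⟨⟨x, rfl⟩, ⟨z, hz⟩⟩
    rw [Submodule.mem_span_singleton]
    refine ⟨∑ p, x p, ?_⟩
    ext ⟨P, ω⟩
    -- Summing over the odd number of horocycles centred at `P`.
    have hs : ∑ ω' : Nsq K, ((Phi K).transpose.mulVecLin x) (P, ω') = ∑ p, x p := by
      simp only [Matrix.mulVecLin_apply, Matrix.mulVec, dotProduct, Matrix.transpose_apply,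
        Phi_apply]
      rw [Finset.sum_comm]
      refine Finset.sum_congr rfl fun p _ => ?_
      rw [← Finset.sum_mul, Finset.sum_eq_single (horN p P)]
      · simp [horN]
      · intro ω' _ h
        rw [if_neg]
        intro h'
        exact h (Subtype.ext h'.symm)
      · simp
    have hcst : ∀ ω' : Nsq K, ((Phi K).transpose.mulVecLin x) (P, ω')
        = ((Phi K).transpose.mulVecLin x) (P, ω) := by
      intro ω'
      rw [← hz]
      cases P <;> rfl
    simp only [hcst, Finset.sum_const, Finset.card_univ, nsmul_eq_mul] at hs
    rw [(ZMod.natCast_eq_one_iff_odd).2 hk, one_mul] at hs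
    rw [hs]
    simp
  have h4 := Submodule.finrank_sup_add_finrank_inf_eq
    (LinearMap.range (Phi K).transpose.mulVecLin) (V0 K)
  have h5 := Submodule.finrank_mono h1
  have h6 := (Submodule.finrank_mono h3).trans (finrank_span_le_card _)
  have h7 := LinearMap.finrank_range_add_finrank_ker (Phi K).mulVecLin
  have h8 := Matrix.rank_transpose (Phi K)
  rw [Module.finrank_fintype_fun_eq_card, Fintype.card_prod, Fintype.card_option] at h7
  rw [finrank_V0 ω₀] at h4
  simp only [Set.toFinset_singleton, Finset.card_singleton] at h6
  simp only [Matrix.rank] at *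
  omega

/-- Multiplication of nonsquares by `g²`. -/
def scaleN (g : Kˣ) : Nsq K ≃ Nsq K where
  toFun ω := ⟨ω * (g : K) ^ 2, nonsq_mul_sq ω.2 g.ne_zero⟩
  invFun ω := ⟨ω * ((g⁻¹ : Kˣ) : K) ^ 2, nonsq_mul_sq ω.2 g⁻¹.ne_zero⟩
  left_inv ω := Subtype.ext (by simp)
  right_inv ω := Subtype.ext (by simp)

/-- The equation `ΦᵀΦx = 0`, written out. -/
lemma gram_eq (hq : Odd (Fintype.card K)) (P : Option K) :
    ∃ κ : Option K → K, ∀ x : Option K × Nsq K → ZMod 2, (Phi K).mulVec x = 0 → ∀ ω : Nsq K,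
      x (P, ω) = ∑ P', if P' = P then 0 else
        ∑ ω' : Nsq K, (if (ω : K) * ω' * κ P' = 1 then 1 else 0) * x (P', ω') := by
  have h2 := two_ne_zero_of_odd hq
  choose! κ hκ hsum using fun P' (h : P ≠ P') => sum_hor_hor_ne (K := K) h2 h
  refine ⟨κ, fun x hx ω => ?_⟩
  have h : ∑ p, Phi K p (P, ω) * (Phi K).mulVec x p = 0 := by simp [hx]
  simp only [Matrix.mulVec, dotProduct, Finset.mul_sum, Phi_apply] at h
  rw [Finset.sum_comm, Fintype.sum_prod_type] at h
  simp only [← mul_assoc, ← Finset.sum_mul] at h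
  have h' : ∑ P', ((if P' = P then x (P, ω) else 0) + if P' = P then 0 else
        ∑ ω' : Nsq K, (if (ω : K) * ω' * κ P' = 1 then 1 else 0) * x (P', ω')) = 0 := by
    refine Eq.trans (Finset.sum_congr rfl fun P' _ => ?_) h
    by_cases hP : P' = P
    · subst hP
      simp only [if_true, add_zero, sum_hor_hor_self hq]
      simp
    · simp only [hP, if_false, zero_add]
      refine Finset.sum_congr rfl fun ω' _ => ?_
      rw [hsum P' (Ne.symm hP)]
  rw [Finset.sum_add_distrib] at h'
  simp only [Finset.sum_ite_eq', Finset.mem_univ, if_true] at h'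
  rw [← sub_eq_zero, CharTwo.sub_eq_add]
  exact h'

/-- If `x` and its translate `y` by the square of a generator are both killed by `Φ`, comparing
the Gram equations of `x` and `y` shows that `x` is invariant under multiplication of the second
coordinate by fourth powers, that is, `x` depends on the centre only. -/
lemma mem_V0_of_scale (hq : Odd (Fintype.card K)) (hm : ¬ IsSquare (-1 : K)) (g : Kˣ)
    (hg : ∀ u : Kˣ, u ∈ Subgroup.zpowers g) (x y : Option K × Nsq K → ZMod 2)
    (hx : (Phi K).mulVec x = 0) (hy : (Phi K).mulVec y = 0)
    (hxE : ∀ P ω, x (P, ω) = y (P, scaleN g ω)) : x ∈ V0 K := by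
  have step : ∀ P ω, x (P, scaleN g (scaleN g ω)) = x (P, ω) := by
    intro P ω
    obtain ⟨κ, hκ⟩ := gram_eq (K := K) hq P
    rw [hκ x hx, hxE, hκ y hy]
    refine Finset.sum_congr rfl fun P' _ => ?_
    split_ifs with hP
    · rfl
    · refine Fintype.sum_equiv (scaleN g) _ _ fun ω' => ?_
      rw [hxE]
      congr 2
      simp only [scaleN, Equiv.coe_fn_mk, eq_iff_iff]
      rw [show (ω : K) * (g : K) ^ 2 * (g : K) ^ 2 * ω' * κ P'
        = ω * (g : K) ^ 2 * (ω' * (g : K) ^ 2) * κ P' by ring]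
  have stepn : ∀ (n : ℕ) P (ω ω' : Nsq K), (ω' : K) = ω * ((g : K) ^ n) ^ 4 →
      x (P, ω') = x (P, ω) := by
    intro n
    induction n with
    | zero =>
      intro P ω ω' h
      rw [show ω' = ω from Subtype.ext (by rw [h]; simp)]
    | succ n ih =>
      intro P ω ω' h
      rw [ih P (scaleN g (scaleN g ω)) ω', step]
      rw [h]; simp only [scaleN, Equiv.coe_fn_mk]; ring
  by_cases hω : Nonempty (Nsq K)
  · obtain ⟨ω₀⟩ := hω
    refine mem_V0 ω₀ x hx fun P ω ω' => ?_
    obtain ⟨c, hc⟩ := nonsq_mul_nonsq _ _ ω'.2 ω.2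
    have hω0 := ω.ne_zero
    have hc0 : c ≠ 0 := by
      rintro rfl
      simp [ω.ne_zero, ω'.ne_zero] at hc
    have hs : ∃ d : K, d ≠ 0 ∧ (ω' : K) = ω * d ^ 4 := by
      -- One of `±c/ω` is a square.
      by_cases hcs : IsSquare (c / ω)
      · obtain ⟨d, hd⟩ := hcs
        refine ⟨d, ?_, ?_⟩
        · rintro rfl
          simp [hc0, hω0] at hd
        · rw [div_eq_iff hω0] at hd
          apply mul_right_cancel₀ hω0
          rw [hc, hd]; ring
      · obtain ⟨d, hd⟩ := nonsq_mul_nonsq _ _ hm hcs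
        refine ⟨d, ?_, ?_⟩
        · rintro rfl
          simp [hc0, hω0] at hd
        · have hd' : c = -(d * d) * ω := by
            rw [← hd]; field_simp
          apply mul_right_cancel₀ hω0
          rw [hc, hd']; ring
    obtain ⟨d, hd0, hd⟩ := hs
    obtain ⟨n, hn⟩ := mem_powers_iff_mem_zpowers.2 (hg (Units.mk0 d hd0))
    refine (stepn n P ω ω' ?_).symm
    rw [hd]
    have : (g : K) ^ n = d := by
      have := congrArg Units.val hn
      simpa using this
    rw [this]
  · have : x = 0 := by
      ext ⟨P, ω⟩
      exact absurd ⟨ω⟩ hω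
    rw [this]; exact Submodule.zero_mem _

/-- The kernel of `Φ` meets its translate by the square of a generator only inside `V0`. -/
lemma rank_Phi_ge (hq : Odd (Fintype.card K)) (hm : ¬ IsSquare (-1 : K)) :
    (Fintype.card K + 1) * Fintype.card (Nsq K) ≤ 2 * (Phi K).rank + Fintype.card K := by
  obtain ⟨g, hg⟩ := IsCyclic.exists_generator (α := Kˣ)
  obtain ⟨L, hL⟩ : ∃ L : (Option K × Nsq K → ZMod 2) ≃ₗ[ZMod 2] (Option K × Nsq K → ZMod 2),
      ∀ y P ω, L y (P, ω) = y (P, scaleN g ω) :=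
    ⟨LinearEquiv.funCongrLeft (ZMod 2) (ZMod 2) ((Equiv.refl _).prodCongr (scaleN g)),
      fun _ _ _ => rfl⟩
  obtain ⟨W, hW⟩ : ∃ W, W = LinearMap.ker (Phi K).mulVecLin := ⟨_, rfl⟩
  have hWm : ∀ x, x ∈ W → (Phi K).mulVec x = 0 := by
    intro x hx
    rw [hW] at hx
    exact hx
  have hinf : W ⊓ W.map L.toLinearMap ≤ V0 K := by
    rintro x ⟨hx, y, hy, rfl⟩
    exact mem_V0_of_scale hq hm g hg _ y (hWm _ hx) (hWm _ hy) (hL y)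
  have hV : Module.finrank (ZMod 2) (V0 K) ≤ Fintype.card K :=
    (LinearMap.finrank_range_le _).trans (Module.finrank_fintype_fun_eq_card _).le
  have h4 := Submodule.finrank_sup_add_finrank_inf_eq W (W.map L.toLinearMap)
  have h5 := Submodule.finrank_le (W ⊔ W.map L.toLinearMap)
  have h6 := Submodule.finrank_mono hinf
  have h7 := LinearMap.finrank_range_add_finrank_ker (Phi K).mulVecLin
  have h8 : Module.finrank (ZMod 2) (W.map L.toLinearMap) = Module.finrank (ZMod 2) W :=
    LinearEquiv.finrank_map_eq L W
  rw [Module.finrank_fintype_fun_eq_card, Fintype.card_prod, Fintype.card_option] at h7 h5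
  rw [← hW] at h7
  change (Phi K).rank + Module.finrank (ZMod 2) W = _ at h7
  clear hinf hWm hW hL
  rw [h8] at h4
  linarith

lemma rank_Ac_three (hq : Odd (Fintype.card K)) (hm : ¬ IsSquare (-1 : K)) :
    (Ac K).rank = Fintype.card (Nsq K) * (Fintype.card (Nsq K) + 1) := by
  have h2 := two_ne_zero_of_odd hq
  have hc := card_Nsq hq
  have h3 : Fintype.card K % 4 = 3 := by
    by_contra h
    exact hm (FiniteField.isSquare_neg_one_iff.2 h)
  have hk : Odd (Fintype.card (Nsq K)) := by rw [Nat.odd_iff]; omega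
  have hle := rank_Phi_le hq h2 hm hk
  have hge := rank_Phi_ge hq hm
  have h7 := LinearMap.finrank_range_add_finrank_ker (Ac K).mulVecLin
  rw [ker_Ac_eq h2 hm, Module.finrank_fintype_fun_eq_card, Fintype.card_prod] at h7
  change (Ac K).rank + (Phi K).rank = _ at h7
  rw [← hc] at *
  generalize Fintype.card (Nsq K) = k at *
  have : (Phi K).rank = k * k := by
    ring_nf at hle hge ⊢
    omega
  rw [this] at h7
  ring_nf at h7 ⊢
  omega

/-! ### The rank when `-1` is a square -/

lemma isSquare_mul_iff {a b : K} (ha : a ≠ 0) (hb : b ≠ 0) :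
    IsSquare (a * b) ↔ (IsSquare a ↔ IsSquare b) := by
  by_cases h1 : IsSquare a <;> by_cases h3 : IsSquare b
  · simp [h1, h3, h1.mul h3]
  · simp only [h1, h3, iff_false]
    obtain ⟨c, rfl⟩ := h1
    have := nonsq_mul_sq h3 (w := c) (by rintro rfl; simp at ha)
    rw [mul_comm, ← sq]; simpa using this
  · simp only [h1, h3, iff_true]
    obtain ⟨c, rfl⟩ := h3
    have := nonsq_mul_sq h1 (w := c) (by rintro rfl; simp at hb)
    rw [← sq]; simpa using this
  · simp [h1, h3, nonsq_mul_nonsq _ _ h1 h3]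

lemma isSquare_div_iff {a b : K} (ha : a ≠ 0) (hb : b ≠ 0) :
    IsSquare (a / b) ↔ (IsSquare a ↔ IsSquare b) := by
  rw [← isSquare_mul_iff ha hb]
  constructor
  · intro h
    have := h.mul (IsSquare.sq b)
    rwa [show a / b * b ^ 2 = a * b by field_simp] at this
  · intro h
    have := h.mul (IsSquare.sq b⁻¹)
    rwa [show a * b * b⁻¹ ^ 2 = a / b by field_simp] at this

/-- `x` lies in the coset of `w₀` modulo fourth powers. When `-1` is a square, the nonsquares
split into two such cosets, and inversion exchanges them. -/
def cls (w₀ x : K) : Prop := ∃ w, w ≠ 0 ∧ x = w₀ * w ^ 4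

lemma cls_iff (hm : IsSquare (-1 : K)) {w₀ x c : K} (hw : ¬ IsSquare w₀) (hx : ¬ IsSquare x)
    (h : x * w₀ = c ^ 2) : cls w₀ x ↔ ¬ IsSquare c := by
  have hw0 : w₀ ≠ 0 := by rintro rfl; exact hw IsSquare.zero
  have hx0 : x ≠ 0 := by rintro rfl; exact hx IsSquare.zero
  have hc0 : c ≠ 0 := by rintro rfl; simp [hw0, hx0] at h
  constructor
  · rintro ⟨w, hw1, rfl⟩ ⟨s, rfl⟩
    have : (w₀ * w ^ 2) ^ 2 = (s ^ 2) ^ 2 := by linear_combination h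
    apply nonsq_mul_sq hw hw1
    rcases sq_eq_sq_iff_eq_or_eq_neg.1 this with h | h
    · rw [h]; exact IsSquare.sq _
    · rw [h, neg_eq_neg_one_mul]; exact hm.mul (IsSquare.sq _)
  · intro hc
    obtain ⟨u, hu⟩ := nonsq_mul_nonsq _ _ hc hw
    refine ⟨u / w₀, div_ne_zero ?_ hw0, ?_⟩
    · rintro rfl
      simp [hc0, hw0] at hu
    · field_simp
      linear_combination (w₀ ^ 2) * h + (c * w₀ + u * u) * hu

lemma cls_div (hm : IsSquare (-1 : K)) {w₀ x g : K} (hw : ¬ IsSquare w₀) (hx : ¬ IsSquare x)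
    (hg : g ≠ 0) : cls w₀ (x / g ^ 2) ↔ (cls w₀ x ↔ IsSquare g) := by
  obtain ⟨c, hc⟩ := nonsq_mul_nonsq _ _ hx hw
  have hw0 : w₀ ≠ 0 := by rintro rfl; exact hw IsSquare.zero
  have hx0 : x ≠ 0 := by rintro rfl; exact hx IsSquare.zero
  have hc0 : c ≠ 0 := by rintro rfl; simp [hw0, hx0] at hc
  have hx' : ¬ IsSquare (x / g ^ 2) := by
    have := nonsq_mul_sq hx (inv_ne_zero hg)
    rwa [inv_pow, ← div_eq_mul_inv] at this
  rw [cls_iff hm hw hx (c := c) (by rw [hc, sq]),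
    cls_iff hm hw hx' (c := c / g) (by rw [div_pow]; field_simp; rw [hc, sq]),
    isSquare_div_iff hc0 hg]
  tauto

lemma cls_inv (hm : IsSquare (-1 : K)) {w₀ x : K} (hw : ¬ IsSquare w₀) (hx : ¬ IsSquare x) :
    cls w₀ x ↔ ¬ cls w₀ x⁻¹ := by
  have hx0 : x ≠ 0 := by rintro rfl; exact hx IsSquare.zero
  have h : x⁻¹ = x / x ^ 2 := by field_simp
  rw [h, cls_div hm hw hx hx0]
  tauto

lemma cls_mul_pow_four {w₀ x w : K} (hw : w ≠ 0) : cls w₀ (w ^ 4 * x) ↔ cls w₀ x := by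
  constructor
  · rintro ⟨v, hv, h⟩
    refine ⟨v / w, div_ne_zero hv hw, ?_⟩
    field_simp
    linear_combination h
  · rintro ⟨v, hv, rfl⟩
    exact ⟨v * w, mul_ne_zero hv hw, by ring⟩

/-- The case of `sum_cls` in which the point at infinity is one of the points `P` with
`hor p P = - hor r P`. -/
lemma sum_cls_none (h2 : (2 : K) ≠ 0) (hm : IsSquare (-1 : K)) {w₀ : K} (hw : ¬ IsSquare w₀)
    (p r : IC K) (h : (p.2 : K) = -r.2) :
    ∑ P, (if cls w₀ (hor r P) ∧ hor p P = -hor r P then (1 : ZMod 2) else 0)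
      = if beta p r = 0 then 1 else 0 := by
  obtain ⟨a, ⟨n, hn⟩⟩ := p
  obtain ⟨a', ⟨n', hn'⟩⟩ := r
  simp only at h
  obtain rfl : n' = -n := by rw [h]; ring
  have hn0 : n ≠ 0 := by rintro rfl; exact hn IsSquare.zero
  rw [Fintype.sum_option]
  obtain ⟨d, rfl⟩ : ∃ d, a' = a + d := ⟨a' - a, by ring⟩
  generalize hp : ((a, ⟨n, hn⟩) : IC K) = p
  generalize hr : ((a + d, ⟨-n, hn'⟩) : IC K) = r
  have hb : beta p r = 0 ↔ d = 0 := by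
    simp only [beta, ← hp, ← hr]
    rw [show (a - (a + d)) ^ 2 - n - -n = d ^ 2 by ring, sq_eq_zero_iff]
  have e1 : (cls w₀ (hor r none) ∧ hor p none = -hor r none) ↔ cls w₀ (-n) := by
    simp [hor, ← hp, ← hr]
  have e2 : ∀ t, (cls w₀ (hor r (some t)) ∧ hor p (some t) = -hor r (some t)) ↔
      (gq p t ^ 2 = gq r t ^ 2 ∧ (cls w₀ (-n) ↔ IsSquare (gq r t))) := by
    intro t
    have h0 := gq_ne_zero p t
    have h0' := gq_ne_zero r t
    have h3 : hor r (some t) = -n / gq r t ^ 2 := by rw [← hr]; rfl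
    have h4 : hor p (some t) = n / gq p t ^ 2 := by rw [← hp]; rfl
    have h5 : hor p (some t) = -hor r (some t) ↔ gq p t ^ 2 = gq r t ^ 2 := by
      rw [h3, h4, neg_div, neg_neg, div_eq_div_iff (pow_ne_zero 2 h0) (pow_ne_zero 2 h0'),
        mul_right_inj' hn0, eq_comm]
    rw [h5, h3, cls_div hm hw hn' h0', and_comm]
  simp only [e1, e2, hb]
  have hg1 : ∀ t, gq p t = (t - a) ^ 2 - n := fun t => by rw [← hp]; rfl
  have hg2 : ∀ t, gq r t = (t - (a + d)) ^ 2 + n := by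
    intro t; simp only [gq, ← hr]; ring
  by_cases hd0 : d = 0
  · subst hd0
    rw [if_pos rfl, Finset.sum_eq_single a]
    · have : gq p a ^ 2 = gq r a ^ 2 := by rw [hg1, hg2]; ring
      have h3 : ¬ IsSquare (gq r a) := by rw [hg2]; simpa using hn
      by_cases hc : cls w₀ (-n) <;> simp [this, h3, hc]
    · intro t _ ht
      rw [if_neg]
      rintro ⟨h3, -⟩
      apply ht
      rw [hg1, hg2] at h3
      have : (2 * 2 * n) * (t - a) ^ 2 = 0 := by linear_combination -h3
      have h4 := (mul_eq_zero.1 this).resolve_left (mul_ne_zero (mul_ne_zero h2 h2) hn0)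
      exact sub_eq_zero.1 (pow_eq_zero_iff two_ne_zero |>.1 h4)
    · simp
  · rw [if_neg hd0]
    obtain ⟨i, hi⟩ := hm
    have hi : i ^ 2 = -1 := by rw [hi, sq]
    have hi1 : i - 1 ≠ 0 := by
      intro h
      rw [sub_eq_zero.1 h] at hi
      exact h2 (by linear_combination hi)
    have hi3 : i + 1 ≠ 0 := by
      intro h
      rw [eq_neg_of_add_eq_zero_left h] at hi
      exact h2 (by linear_combination hi)
    have hi0 : i ≠ 0 := by
      rintro rfl
      simp at hi
    -- `gq p = gq r` has the solution `t₁`, and `gq p = - gq r` the solutions `t₂`, `t₃`.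
    obtain ⟨t₁, ht₁⟩ : ∃ t : K, 2 * d * (t - a) = d ^ 2 + 2 * n :=
      ⟨a + (d ^ 2 + 2 * n) / (2 * d), by field_simp; ring⟩
    obtain ⟨t₂, ht₂⟩ : ∃ t : K, (i - 1) * (t - (a + d)) = d :=
      ⟨a + d + d / (i - 1), by field_simp; ring⟩
    obtain ⟨t₃, ht₃⟩ : ∃ t : K, (i + 1) * (t - (a + d)) = -d :=
      ⟨a + d + -d / (i + 1), by field_simp; ring⟩
    have p1 : gq p t₁ = gq r t₁ := by
      rw [hg1, hg2]; linear_combination ht₁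
    have p2 : gq p t₂ = -gq r t₂ := by
      rw [hg1, hg2]
      have : t₂ - a = i * (t₂ - (a + d)) := by linear_combination -ht₂
      rw [this]
      linear_combination (t₂ - (a + d)) ^ 2 * hi
    have p3 : gq p t₃ = -gq r t₃ := by
      rw [hg1, hg2]
      have : t₃ - a = -i * (t₃ - (a + d)) := by linear_combination ht₃
      rw [this]
      linear_combination (t₃ - (a + d)) ^ 2 * hi
    have self_neg : ∀ t, gq r t = -gq r t → False := by
      intro t h
      apply gq_ne_zero r t
      apply mul_left_cancel₀ h2
      linear_combination h
    have n12 : t₁ ≠ t₂ := by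
      rintro rfl
      exact self_neg t₁ (p1.symm.trans p2)
    have n13 : t₁ ≠ t₃ := by
      rintro rfl
      exact self_neg t₁ (p1.symm.trans p3)
    have n23 : t₂ ≠ t₃ := by
      rintro rfl
      have h3 : t₂ - (a + d) = -d := by
        apply mul_left_cancel₀ h2
        linear_combination ht₃ - ht₂
      rw [h3] at ht₂
      have : i * d = 0 := by linear_combination -ht₂
      exact (mul_ne_zero hi0 hd0) this
    have sol : ∀ t, gq p t ^ 2 = gq r t ^ 2 ↔ (t = t₁ ∨ t = t₂ ∨ t = t₃) := by
      intro t
      constructor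
      · intro h
        rcases sq_eq_sq_iff_eq_or_eq_neg.1 h with h | h
        · left
          rw [hg1, hg2] at h
          apply sub_eq_zero.1
          apply (mul_eq_zero.1 (_ : 2 * d * (t - t₁) = 0)).resolve_left (mul_ne_zero h2 hd0)
          linear_combination h - ht₁
        · right
          rw [hg1, hg2] at h
          have : ((i - 1) * (t - t₂)) * ((i + 1) * (t - t₃)) = 0 := by
            have e2 : (i - 1) * (t - t₂) = (i - 1) * (t - (a + d)) - d := by
              linear_combination -ht₂
            have e3 : (i + 1) * (t - t₃) = (i + 1) * (t - (a + d)) + d := by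
              linear_combination -ht₃
            rw [e2, e3]
            linear_combination (t - (a + d)) ^ 2 * hi - h
          rcases mul_eq_zero.1 this with h | h
          · exact Or.inl (sub_eq_zero.1 ((mul_eq_zero.1 h).resolve_left hi1))
          · exact Or.inr (sub_eq_zero.1 ((mul_eq_zero.1 h).resolve_left hi3))
      · rintro (rfl | rfl | rfl)
        · rw [p1]
        · rw [p2]; ring
        · rw [p3]; ring
    have prod : gq r t₂ * gq r t₃ = gq r t₁ * d ^ 2 := by
      have v2 : t₂ - (a + d) = -(i + 1) * d / 2 := by
        field_simp
        apply mul_left_cancel₀ hi1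
        linear_combination 2 * ht₂ + d * hi
      have v3 : t₃ - (a + d) = (i - 1) * d / 2 := by
        field_simp
        apply mul_left_cancel₀ hi3
        linear_combination 2 * ht₃ - d * hi
      have v1 : t₁ - (a + d) = n / d - d / 2 := by
        field_simp
        linear_combination ht₁
      rw [hg2, hg2, hg2, v1, v2, v3]
      have e2 : (-(i + 1) * d / 2) ^ 2 = i * d ^ 2 / 2 := by
        field_simp; linear_combination hi
      have e3 : ((i - 1) * d / 2) ^ 2 = -i * d ^ 2 / 2 := by
        field_simp; linear_combination hi
      rw [e2, e3]
      field_simp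
      linear_combination -d ^ 4 * hi
    have hsq : IsSquare (gq r t₁) ↔ (IsSquare (gq r t₂) ↔ IsSquare (gq r t₃)) := by
      rw [← isSquare_mul_iff (gq_ne_zero r t₂) (gq_ne_zero r t₃), prod,
        isSquare_mul_iff (gq_ne_zero r t₁) (pow_ne_zero 2 hd0)]
      have := IsSquare.sq d
      tauto
    simp only [sol]
    have split : ∀ t, (if (t = t₁ ∨ t = t₂ ∨ t = t₃) ∧ (cls w₀ (-n) ↔ IsSquare (gq r t))
        then (1 : ZMod 2) else 0) =
        (if t = t₁ then (if (cls w₀ (-n) ↔ IsSquare (gq r t₁)) then 1 else 0) else 0) +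
        (if t = t₂ then (if (cls w₀ (-n) ↔ IsSquare (gq r t₂)) then 1 else 0) else 0) +
        (if t = t₃ then (if (cls w₀ (-n) ↔ IsSquare (gq r t₃)) then 1 else 0) else 0) := by
      intro t
      by_cases c1 : t = t₁
      · subst c1; simp [n12, n13]
      · by_cases c2 : t = t₂
        · subst c2; simp [n12.symm, n23]
        · by_cases c3 : t = t₃
          · subst c3; simp [n13.symm, n23.symm]
          · simp [c1, c2, c3]
    simp only [split, Finset.sum_add_distrib, Finset.sum_ite_eq', Finset.mem_univ, if_true, hsq]
    by_cases c0 : cls w₀ (-n) <;> by_cases c2 : IsSquare (gq r t₂) <;>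
      by_cases c3 : IsSquare (gq r t₃) <;> simp only [c0, c2, c3, if_true, if_false, iff_true,
        iff_false, not_true_eq_false] <;> decide

/-- The point `P` is found by solving `gq r = δ * gq p`, where `δ² = - r.2 / p.2`. -/
lemma exists_hor_neg (h2 : (2 : K) ≠ 0) (hm : IsSquare (-1 : K)) (p r : IC K)
    (h : beta p r = 0) : ∃ P, hor p P = -hor r P := by
  obtain ⟨a, n⟩ := p
  obtain ⟨a', n'⟩ := r
  have hn0 := n.ne_zero
  have hδ : ∃ δ : K, δ ≠ 1 ∧ (n' : K) = -n * δ ^ 2 := by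
    obtain ⟨i, hi⟩ := hm
    obtain ⟨c, hc⟩ := nonsq_mul_nonsq _ _ n.2 n'.2
    have e : (n' : K) = -n * (i * c / n) ^ 2 := by
      field_simp
      linear_combination hc - c ^ 2 * hi
    by_cases h1 : i * c / n = 1
    · refine ⟨-1, ?_, ?_⟩
      · intro h
        exact h2 (by linear_combination -h)
      · rw [e, h1]; ring
    · exact ⟨_, h1, e⟩
  obtain ⟨δ, h1, hδ⟩ := hδ
  have h1' : 1 - δ ≠ 0 := sub_ne_zero.2 (Ne.symm h1)
  have hδ0 : δ ≠ 0 := by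
    rintro rfl
    exact n'.ne_zero (by rw [hδ]; ring)
  refine ⟨some ((a' - δ * a) / (1 - δ)), ?_⟩
  simp only [beta] at h
  have hg1 : gq (a, n) ((a' - δ * a) / (1 - δ)) = 2 * n * δ / (1 - δ) := by
    simp only [gq]
    field_simp
    linear_combination h + hδ
  have hg2 : gq (a', n') ((a' - δ * a) / (1 - δ)) = 2 * n * δ ^ 2 / (1 - δ) := by
    simp only [gq]
    field_simp
    linear_combination δ ^ 2 * h + (2 * δ - 1) * hδ
  simp only [hor, hg1, hg2]
  rw [hδ]
  field_simp

/-- Each half of the set of points `P` with `hor p P = - hor r P`, cut out by a coset of the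
fourth powers, has odd size exactly when `p` and `r` are conjugate. -/
lemma sum_cls (h2 : (2 : K) ≠ 0) (hm : IsSquare (-1 : K)) {w₀ : K} (hw : ¬ IsSquare w₀)
    (p r : IC K) :
    ∑ P, (if cls w₀ (hor r P) ∧ hor p P = -hor r P then (1 : ZMod 2) else 0)
      = if beta p r = 0 then 1 else 0 := by
  by_cases hP : ∃ P, hor p P = -hor r P
  · obtain ⟨P₀, hP₀⟩ := hP
    obtain ⟨gI, gP, μ, h1, h3, h6, h4, h5⟩ := transport P₀
    have e : ∀ s, hor s P₀ = (gI s).2 := by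
      intro s
      have := h4 s P₀
      rw [h1, h3, one_mul] at this
      exact this.symm
    have := sum_cls_none h2 hm hw (gI p) (gI r) (by rw [← e, ← e, hP₀])
    simp only [h5] at this
    rw [← this]
    refine Fintype.sum_equiv gP _ _ fun P => ?_
    obtain ⟨w, hw1, hμ⟩ := h6 P
    have hμ0 : μ P ≠ 0 := by rw [hμ]; exact pow_ne_zero 4 hw1
    have e1 : cls w₀ (μ P * hor r P) ↔ cls w₀ (hor r P) := by
      rw [hμ]; exact cls_mul_pow_four hw1
    have e2 : μ P * hor p P = -(μ P * hor r P) ↔ hor p P = -hor r P := by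
      rw [← mul_neg]; exact mul_right_inj' hμ0
    simp only [h4, e1, e2]
  · rw [if_neg (fun h => hP (exists_hor_neg h2 hm p r h))]
    push Not at hP
    exact Finset.sum_eq_zero fun P _ => if_neg fun h => hP P h.2

/-- The nonsquares in the coset of `w₀` modulo fourth powers. -/
abbrev N1 (w₀ : K) := {ω : Nsq K // cls w₀ (ω : K)}

lemma card_N1 (hm : IsSquare (-1 : K)) {w₀ : K} (hw : ¬ IsSquare w₀) :
    2 * Fintype.card (N1 w₀) = Fintype.card (Nsq K) := by
  have hinv : ∀ ω : Nsq K, ¬ IsSquare (ω : K)⁻¹ := fun ω => by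
    rw [isSquare_inv]; exact ω.2
  let e : Nsq K ≃ Nsq K :=
    { toFun := fun ω => ⟨(ω : K)⁻¹, hinv ω⟩
      invFun := fun ω => ⟨(ω : K)⁻¹, hinv ω⟩
      left_inv := fun ω => Subtype.ext (inv_inv _)
      right_inv := fun ω => Subtype.ext (inv_inv _) }
  have h := Fintype.card_congr (e.subtypeEquiv (p := fun ω : Nsq K => cls w₀ (ω : K))
    (q := fun ω : Nsq K => ¬ cls w₀ (ω : K)) fun ω => cls_inv hm hw ω.2)
  have h' := Fintype.card_subtype_compl (fun ω : Nsq K => cls w₀ (ω : K))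
  have h3 := Fintype.card_subtype_le (fun ω : Nsq K => cls w₀ (ω : K))
  rw [Fintype.card_eq_nat_card (α := {ω : Nsq K // cls w₀ (ω : K)})] at *
  rw [Fintype.card_eq_nat_card (α := {ω : Nsq K // ¬ cls w₀ (ω : K)})] at *
  omega

/-- The columns of `Φ` belonging to the coset of `w₀`. -/
def Phi1 (w₀ : K) : Matrix (IC K) (Option K × N1 w₀) (ZMod 2) :=
  Matrix.of fun p c => if hor p c.1 = c.2.1 then 1 else 0

/-- The columns of `Φ` belonging to the coset of `-w₀`, labelled by the coset of `w₀`. -/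
def Phi1neg (w₀ : K) : Matrix (IC K) (Option K × N1 w₀) (ZMod 2) :=
  Matrix.of fun p c => if hor p c.1 = -c.2.1 then 1 else 0

/-- Horocycles whose coordinates lie in one fixed coset of the fourth powers form an orthonormal
system. -/
lemma Phi1_gram (hq : Odd (Fintype.card K)) (hm : IsSquare (-1 : K)) {w₀ : K}
    (hw : ¬ IsSquare w₀) : (Phi1 w₀).transpose * Phi1 w₀ = 1 := by
  have h2 := two_ne_zero_of_odd hq
  ext ⟨P, ω⟩ ⟨P', ω'⟩
  rw [Matrix.mul_apply, Matrix.one_apply]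
  simp only [Matrix.transpose_apply, Phi1, Matrix.of_apply, Prod.mk.injEq]
  by_cases hP : P = P'
  · subst hP
    rw [sum_hor_hor_self hq P ω.1 ω'.1]
    simp [Subtype.ext_iff]
  · obtain ⟨κ, ⟨w, hw0, rfl⟩, hs⟩ := sum_hor_hor_ne h2 hP
    rw [hs, if_neg, if_neg (fun h => hP h.1)]
    intro h
    -- `ω'` would lie in the same coset as `ω⁻¹`.
    have h3 : (ω.1 : K)⁻¹ = w ^ 4 * ω'.1 := by
      have := ω.1.ne_zero
      field_simp
      linear_combination -h
    apply (cls_inv hm hw ω.1.2).1 ω.2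
    rw [h3, cls_mul_pow_four hw0]
    exact ω'.2

lemma Ac_mul_Phi1neg (h2 : (2 : K) ≠ 0) (hm : IsSquare (-1 : K)) (w₀ : K) :
    Ac K * Phi1neg w₀ = Phi1 w₀ := by
  ext p ⟨P, ω⟩
  rw [Matrix.mul_apply]
  have hn : ¬ IsSquare (-(ω.1 : K)) := by
    intro h
    have := hm.mul h
    rw [neg_one_mul, neg_neg] at this
    exact ω.1.2 this
  refine (sum_beta_hor h2 p P ⟨-ω.1, hn⟩).trans ?_
  simp [Phi1]

lemma Ac_eq (h2 : (2 : K) ≠ 0) (hm : IsSquare (-1 : K)) {w₀ : K} (hw : ¬ IsSquare w₀) :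
    Ac K = Phi1neg w₀ * (Phi1 w₀).transpose := by
  ext p r
  rw [Matrix.mul_apply, Fintype.sum_prod_type]
  refine (sum_cls h2 hm hw p r).symm.trans (Finset.sum_congr rfl fun P _ => ?_)
  simp only [Phi1, Phi1neg, Matrix.transpose_apply, Matrix.of_apply]
  by_cases hc : cls w₀ (hor r P)
  · rw [Finset.sum_eq_single ⟨horN r P, hc⟩]
    · simp only [horN, hc, true_and, if_true, mul_one]
      congr
    · intro ω _ hω
      rw [if_neg (c := hor r P = _), mul_zero]
      intro h
      exact hω (Subtype.ext (Subtype.ext h.symm))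
    · simp
  · rw [if_neg (fun h => hc h.1)]
    symm
    refine Finset.sum_eq_zero fun ω _ => ?_
    rw [if_neg (c := hor r P = _), mul_zero]
    intro h
    exact hc (h ▸ ω.2)

lemma rank_Ac_one (hq : Odd (Fintype.card K)) (hm : IsSquare (-1 : K)) :
    (Ac K).rank = Fintype.card (Nsq K) * (Fintype.card (Nsq K) + 1) := by
  have h2 := two_ne_zero_of_odd hq
  have hc := card_Nsq hq
  have hne : Nonempty (Nsq K) := by
    rw [← Fintype.card_pos_iff]
    have := Fintype.one_lt_card (α := K)
    omega
  obtain ⟨w₀, hw⟩ := hne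
  have hN := card_N1 hm hw
  have hC : Fintype.card (Option K × N1 w₀) = Fintype.card (Nsq K) * (Fintype.card (Nsq K) + 1) := by
    rw [Fintype.card_prod, Fintype.card_option, ← hc, ← hN]
    ring
  rw [← hC]
  apply le_antisymm
  · rw [Ac_eq h2 hm hw]
    exact (Matrix.rank_mul_le_left _ _).trans (Matrix.rank_le_card_width _)
  · have h1 := Matrix.rank_mul_le_right (Phi1 w₀).transpose (Phi1 w₀)
    rw [Phi1_gram hq hm hw, Matrix.rank_one] at h1
    refine h1.trans ?_
    rw [← Ac_mul_Phi1neg h2 hm w₀]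
    exact Matrix.rank_mul_le_left _ _

/-! ### Internal points in affine coordinates -/

lemma Ipts_zero_ne (p : Ipts K) : p.1.rep 0 ≠ 0 := by
  intro h
  apply p.2
  rw [Qf, h]
  exact ⟨p.1.rep 1, by ring⟩

/-- The coordinates `(a, n)` of an internal point, which is spanned by `(1, a, a² - n)`. -/
def toIC (p : Ipts K) : IC K :=
  (p.1.rep 1 / p.1.rep 0, ⟨Qf K p.1.rep / p.1.rep 0 ^ 2, by
    have := nonsq_mul_sq p.2 (inv_ne_zero (Ipts_zero_ne p))
    rwa [inv_pow, ← div_eq_mul_inv] at this⟩)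

lemma toIC_bijective : Function.Bijective (toIC (K := K)) := by
  constructor
  · intro p r h
    have hp := Ipts_zero_ne p
    have hr := Ipts_zero_ne r
    have h1 : p.1.rep 1 / p.1.rep 0 = r.1.rep 1 / r.1.rep 0 := congrArg Prod.fst h
    have h3 : Qf K p.1.rep / p.1.rep 0 ^ 2 = Qf K r.1.rep / r.1.rep 0 ^ 2 :=
      congrArg (fun c : IC K => (c.2 : K)) h
    apply Subtype.ext
    rw [← p.1.mk_rep, ← r.1.mk_rep, Projectivization.mk_eq_mk_iff']
    refine ⟨p.1.rep 0 / r.1.rep 0, ?_⟩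
    simp only [Qf] at h3
    rw [div_eq_div_iff hp hr] at h1
    rw [div_eq_div_iff (pow_ne_zero 2 hp) (pow_ne_zero 2 hr)] at h3
    ext j
    fin_cases j
    · simp [hr]
    · simp only [Fin.mk_one, Pi.smul_apply, smul_eq_mul]
      field_simp
      linear_combination -h1
    · simp only [Fin.reduceFinMk, Pi.smul_apply, smul_eq_mul]
      field_simp
      apply mul_left_cancel₀ (mul_ne_zero hp hr)
      linear_combination h3 - (p.1.rep 1 * r.1.rep 0 + r.1.rep 1 * p.1.rep 0) * h1
  · rintro ⟨a, n⟩
    have hv : (![1, a, a ^ 2 - n] : Fin 3 → K) ≠ 0 := fun h => by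
      simpa using congrFun h 0
    obtain ⟨u, hu⟩ := Projectivization.exists_smul_eq_mk_rep K _ hv
    have e0 : (Projectivization.mk K _ hv).rep 0 = u := by
      rw [← hu]; simp [Units.smul_def]
    have e1 : (Projectivization.mk K _ hv).rep 1 = u * a := by
      rw [← hu]; simp [Units.smul_def]
    have e2 : (Projectivization.mk K _ hv).rep 2 = u * (a ^ 2 - n) := by
      rw [← hu]; simp [Units.smul_def]
    have hQ : Qf K (Projectivization.mk K _ hv).rep = n * (u : K) ^ 2 := by
      rw [Qf, e0, e1, e2]; ring
    have hinternal : Internal K (Projectivization.mk K _ hv) := by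
      rw [Internal, Nonsq, hQ]
      exact nonsq_mul_sq n.2 u.ne_zero
    refine ⟨⟨_, hinternal⟩, Prod.ext ?_ (Subtype.ext ?_)⟩
    · simp only [toIC, e0, e1]
      field_simp
    · simp only [toIC, e0, hQ]
      field_simp

lemma Amat_eq_submatrix : Amat K = (Ac K).submatrix (toIC (K := K)) toIC := by
  ext p r
  have hp := Ipts_zero_ne p
  have hr := Ipts_zero_ne r
  have h : perpDot K p.1 r.1.rep = p.1.rep 0 * r.1.rep 0 * beta (toIC p) (toIC r) := by
    simp only [perpDot, beta, toIC, Qf]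
    field_simp
    ring
  have h' : OnPerp K p.1 r.1 ↔ beta (toIC p) (toIC r) = 0 := by
    rw [OnPerp, h]
    simp [hp, hr]
  simp only [Amat, Ac, Matrix.submatrix_apply, Matrix.of_apply, h']

lemma rank_Amat (hq : Odd (Fintype.card K)) :
    (Amat K).rank = Fintype.card (Nsq K) * (Fintype.card (Nsq K) + 1) := by
  have : Amat K = (Ac K).submatrix (Equiv.ofBijective _ (toIC_bijective (K := K)))
      (Equiv.ofBijective _ (toIC_bijective (K := K))) := Amat_eq_submatrix
  rw [this, Matrix.rank_submatrix]
  by_cases hm : IsSquare (-1 : K)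
  · exact rank_Ac_one hq hm
  · exact rank_Ac_three hq hm

end Proof

/-- The `F_2`-null space `{x : x·A = 0}` of `A` has dimension `(q-1)^2/4`. -/
theorem dim_nullspace (hq : Odd (Fintype.card K)) :
    Module.finrank (ZMod 2) (LinearMap.ker (Matrix.vecMulLinear (Amat K))) =
      (Fintype.card K - 1) ^ 2 / 4 := by
  have hr := rank_Amat hq
  have hc := card_Nsq hq
  have h := LinearMap.finrank_range_add_finrank_ker (Matrix.vecMulLinear (Amat K))
  rw [← Matrix.mulVecLin_transpose] at h ⊢
  have hI : Fintype.card (Ipts K) = Fintype.card K * Fintype.card (Nsq K) := by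
    rw [Fintype.card_congr (Equiv.ofBijective _ (toIC_bijective (K := K))), Fintype.card_prod]
  change (Amat K).transpose.rank + _ = _ at h
  rw [Matrix.rank_transpose, hr, Module.finrank_fintype_fun_eq_card, hI, ← hc] at h
  rw [← hc]
  generalize Fintype.card (Nsq K) = k at *
  have h4 : (2 * k + 1 - 1) ^ 2 / 4 = k * k := by
    rw [Nat.add_sub_cancel, mul_pow, sq k]
    omega
  rw [h4]
  ring_nf at h ⊢
  omega

end ConicPaper
end
end

section
/- For every internal point p and every passant line ℓ, the number of points in N(p) ∩ I_ℓ is even. -/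
/-!
Polarity turns every condition into one about the quadratic form `Q = x₁² - x₀x₂` and its polar
form `B`. The line `ℓ` is passant iff its pole `P` is internal, and for points `p ≠ r` the line `pr`
is passant iff `B(p,r)² - 4 Q(p) Q(r)` is a nonsquare (`passant_join_iff`), since that number is
the discriminant of the line through `p` and `r`.

Let `D` be the point of `ℓ` on the line `pP` (any point of the set to be counted if `p = P`) and let
`C` be the pole of `PD`, so that `P`, `C`, `D` are pairwise orthogonal and `p` lies on `PD`.
No point of `ℓ` is isotropic (`isSquare_of_perp_isotropic`), so the reflection with centre `C` and
axis `PD` is defined. It is an isometry fixing `p` and `P`; hence it acts as an involution on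
`N(p) ∩ I_ℓ`, and its only possible fixed points there are `C` and `D` (`fixed_cases`). A computation
with the quadratic character, using that `Q(p)` and `Q(P)` are nonsquares and
`Q(C) = -4 Q(P) Q(D)`, shows that each of `C` and `D` is in the set iff `-1` and `Q(D)` are both
nonsquares (`mem_C_iff`, `mem_D_iff`). So `C` and `D` are both in the set or both outside it, and
the number of points is even (`even_ncard_of_involution`). The convention on `p ∈ N(p)` is exactly
what makes this work when `D = p`, because `-1` is a nonsquare iff `q ≡ 3 (mod 4)`.
-/


open scoped Classical

noncomputable section

namespace ConicPaper

variable (K : Type) [Field K] [Fintype K]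

/-- `N(p)`: the internal points lying on at least one passant line through `p`;
`p` itself is excluded when `q ≡ 1 (mod 4)` and included when `q ≡ 3 (mod 4)`. -/
def NbhdSet (p : Pt K) : Set (Pt K) :=
  if Fintype.card K % 4 = 1 then
    {r | Internal K r ∧ r ≠ p ∧ ∃ ℓ, Passant K ℓ ∧ OnL K p ℓ ∧ OnL K r ℓ}
  else
    {r | Internal K r ∧ ∃ ℓ, Passant K ℓ ∧ OnL K p ℓ ∧ OnL K r ℓ}

/-! ### Polar form, poles and reflections on coordinate vectors -/

section Vectors

variable {F : Type} [Field F]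

/-- The polar form of `Qf`, normalised so that `Bf v v = 2 * Qf v`. -/
def Bf (u v : Fin 3 → F) : F := 2 * u 1 * v 1 - u 0 * v 2 - u 2 * v 0

/-- The cross product: line coordinates of the join of two points. -/
def cr (u v : Fin 3 → F) : Fin 3 → F :=
  ![u 1 * v 2 - u 2 * v 1, u 2 * v 0 - u 0 * v 2, u 0 * v 1 - u 1 * v 0]

/-- The pole, with respect to the conic, of the line with coordinates `b`, scaled so that `Qf` of
the pole equals the discriminant of the line. -/
def pole (b : Fin 3 → F) : Fin 3 → F := ![2 * b 2, -b 1, 2 * b 0]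

/-- The discriminant of `Qf` restricted to the span of `u` and `v`. -/
def Dl (u v : Fin 3 → F) : F := Bf u v ^ 2 - 4 * Qf F u * Qf F v

/-- The reflection with centre `C` whose axis is the polar line of `C`; meaningful when
`Qf C ≠ 0`. -/
def refl (C : Fin 3 → F) : (Fin 3 → F) →ₗ[F] (Fin 3 → F) where
  toFun v := v - (Bf v C / Qf F C) • C
  map_add' u v := by
    ext i; simp only [Bf, Pi.add_apply, Pi.sub_apply, Pi.smul_apply, smul_eq_mul]; ring
  map_smul' k v := by
    ext i
    simp only [Bf, Pi.sub_apply, Pi.smul_apply, smul_eq_mul, RingHom.id_apply]; ring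

lemma refl_apply (C v : Fin 3 → F) : refl C v = v - (Bf v C / Qf F C) • C := rfl

lemma Bf_comm (u v : Fin 3 → F) : Bf u v = Bf v u := by simp only [Bf]; ring

lemma Bf_self (u : Fin 3 → F) : Bf u u = 2 * Qf F u := by simp only [Bf, Qf]; ring

lemma Bf_smul (k : F) (u v : Fin 3 → F) : Bf u (k • v) = k * Bf u v := by
  simp only [Bf, Pi.smul_apply, smul_eq_mul]; ring

lemma Qf_smul (k : F) (v : Fin 3 → F) : Qf F (k • v) = k ^ 2 * Qf F v := by
  simp only [Qf, Pi.smul_apply, smul_eq_mul]; ring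

lemma Dl_smul (k : F) (u v : Fin 3 → F) : Dl u (k • v) = k ^ 2 * Dl u v := by
  simp only [Dl, Bf_smul, Qf_smul]; ring

lemma Bf_sub_smul (u v w : Fin 3 → F) (t : F) :
    Bf u (v - t • w) = Bf u v - t * Bf u w := by
  simp only [Bf, Pi.sub_apply, Pi.smul_apply, smul_eq_mul]; ring

lemma Qf_sub_smul (v w : Fin 3 → F) (t : F) :
    Qf F (v - t • w) = Qf F v - t * Bf v w + t ^ 2 * Qf F w := by
  simp only [Qf, Bf, Pi.sub_apply, Pi.smul_apply, smul_eq_mul]; ring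

lemma Qf_refl {C : Fin 3 → F} (hC : Qf F C ≠ 0) (v : Fin 3 → F) :
    Qf F (refl C v) = Qf F v := by
  rw [refl_apply, Qf_sub_smul]; field_simp; ring

lemma Bf_refl {C u : Fin 3 → F} (hu : Bf u C = 0) (v : Fin 3 → F) :
    Bf u (refl C v) = Bf u v := by
  rw [refl_apply, Bf_sub_smul, hu]; ring

lemma refl_fix {C u : Fin 3 → F} (hu : Bf u C = 0) : refl C u = u := by
  rw [refl_apply, hu]; simp

lemma refl_refl {C : Fin 3 → F} (hC : Qf F C ≠ 0) (v : Fin 3 → F) :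
    refl C (refl C v) = v := by
  rw [refl_apply C (refl C v), Bf_comm, refl_apply, Bf_sub_smul, Bf_self, Bf_comm C v]
  ext i
  simp only [Pi.sub_apply, Pi.smul_apply, smul_eq_mul]; field_simp; ring

lemma refl_injective {C : Fin 3 → F} (hC : Qf F C ≠ 0) : Function.Injective (refl C) :=
  Function.LeftInverse.injective (refl_refl hC)

lemma exists_smul_of_cr {u v : Fin 3 → F} (hu : u ≠ 0) (h : cr u v = 0) : ∃ k : F, v = k • u := by
  have h0 : u 1 * v 2 - u 2 * v 1 = 0 := congrFun h 0
  have h1 : u 2 * v 0 - u 0 * v 2 = 0 := congrFun h 1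
  have h2 : u 0 * v 1 - u 1 * v 0 = 0 := congrFun h 2
  obtain ⟨i, hi⟩ := Function.ne_iff.mp hu
  simp only [Pi.zero_apply] at hi
  refine ⟨v i / u i, ?_⟩
  ext j
  simp only [Pi.smul_apply, smul_eq_mul]
  rw [div_mul_eq_mul_div, eq_div_iff hi]
  fin_cases i <;> fin_cases j <;> simp only [Fin.zero_eta, Fin.mk_one, Fin.reduceFinMk] <;> grind

lemma Qf_pole_cr (u v : Fin 3 → F) : Qf F (pole (cr u v)) = Dl u v := by
  simp [Qf, pole, cr, Dl, Bf]; ring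

lemma Bf_pole (b v : Fin 3 → F) :
    Bf (pole b) v = -2 * (v 0 * b 0 + v 1 * b 1 + v 2 * b 2) := by
  simp [Bf, pole]; ring

lemma Bf_pole_left (u v : Fin 3 → F) : Bf u (pole (cr u v)) = 0 := by
  rw [Bf_comm, Bf_pole]; simp only [cr, Matrix.cons_val]; ring

lemma Bf_pole_right (u v : Fin 3 → F) : Bf v (pole (cr u v)) = 0 := by
  rw [Bf_comm, Bf_pole]; simp only [cr, Matrix.cons_val]; ring

/-- The triple product expansion for the conic: on the polar line of `P`, applying
`pole (cr P ·)` twice is multiplication by `4 * Qf P`. -/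
lemma pole_pole (P D : Fin 3 → F) (h : Bf P D = 0) :
    pole (cr P (pole (cr P D))) = (4 * Qf F P) • D := by
  have h' : 2 * P 1 * D 1 - P 0 * D 2 - P 2 * D 0 = 0 := h
  ext i
  fin_cases i <;> simp [pole, cr, Qf]
  · linear_combination (-2 * P 0) * h'
  · linear_combination (-2 * P 1) * h'
  · linear_combination (-2 * P 2) * h'

lemma cr_pole_eq_zero (P C v : Fin 3 → F) (h1 : Bf P v = 0) (h2 : Bf C v = 0) :
    cr (pole (cr P C)) v = 0 := by
  have hPv' : 2 * P 1 * v 1 - P 0 * v 2 - P 2 * v 0 = 0 := h1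
  have hCv' : 2 * C 1 * v 1 - C 0 * v 2 - C 2 * v 0 = 0 := h2
  ext i
  fin_cases i <;> simp [pole, cr]
  · linear_combination P 2 * hCv' - C 2 * hPv'
  · linear_combination 2 * C 1 * hPv' - 2 * P 1 * hCv'
  · linear_combination P 0 * hCv' - C 0 * hPv'

/-- A point on a tangent of the conic is never internal: the tangent at the isotropic point `w`
is the polar line of `w`. -/
lemma isSquare_of_perp_isotropic (h2 : (2 : F) ≠ 0) {w p : Fin 3 → F} (hw : w ≠ 0)
    (hQ : Qf F w = 0) (hB : Bf p w = 0) : IsSquare (Qf F p) := by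
  have hQ' : w 1 ^ 2 - w 0 * w 2 = 0 := hQ
  have hB' : 2 * p 1 * w 1 - p 0 * w 2 - p 2 * w 0 = 0 := hB
  by_cases h1 : w 1 = 0
  · have h02 : w 0 * w 2 = 0 := by rw [h1] at hQ'; linear_combination -hQ'
    rcases mul_eq_zero.mp h02 with h0 | h0
    · have hw2 : w 2 ≠ 0 := by
        intro hw2; apply hw; ext i; fin_cases i <;> simp [h0, h1, hw2]
      have : p 0 = 0 := by
        have : p 0 * w 2 = 0 := by rw [h1, h0] at hB'; linear_combination -hB'
        exact (mul_eq_zero.mp this).resolve_right hw2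
      exact ⟨p 1, by simp only [Qf, this]; ring⟩
    · have hw2 : w 0 ≠ 0 := by
        intro hw2; apply hw; ext i; fin_cases i <;> simp [h0, h1, hw2]
      have : p 2 = 0 := by
        have : p 2 * w 0 = 0 := by rw [h1, h0] at hB'; linear_combination -hB'
        exact (mul_eq_zero.mp this).resolve_right hw2
      exact ⟨p 1, by simp only [Qf, this]; ring⟩
  · refine ⟨(p 0 * w 2 - p 2 * w 0) / (2 * w 1), ?_⟩
    simp only [Qf]
    field_simp
    linear_combination (2 * p 1 * w 1 + p 0 * w 2 + p 2 * w 0) * hB' - 4 * p 0 * p 2 * hQ'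

lemma not_isSquare_sq_mul {k a : F} (hk : k ≠ 0) : ¬ IsSquare (k ^ 2 * a) ↔ ¬ IsSquare a := by
  refine not_congr ⟨?_, ?_⟩
  · rintro ⟨r, hr⟩
    exact ⟨r / k, by field_simp; linear_combination hr⟩
  · rintro ⟨r, rfl⟩
    exact ⟨k * r, by ring⟩

lemma four_ne_zero_of_two (h2 : (2 : F) ≠ 0) : (4 : F) ≠ 0 := by
  have : (4 : F) = 2 * 2 := by norm_num
  rw [this]; exact mul_ne_zero h2 h2

/-- A vector `v` on the polar line of `P` that the reflection centred at
`C = pole (cr P D)` maps to a multiple of itself is proportional to `C` or to `D`. -/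
lemma fixed_cases (h2 : (2 : F) ≠ 0) {P D v : Fin 3 → F} (hP : Qf F P ≠ 0) (hD : D ≠ 0)
    (hPD : Bf P D = 0) (hC : Qf F (pole (cr P D)) ≠ 0) (hPv : Bf P v = 0) {k : F}
    (hk : refl (pole (cr P D)) v = k • v) :
    (∃ a : F, v = a • D) ∨ ∃ a : F, a • v = pole (cr P D) := by
  have hpp := pole_pole P D hPD
  set C := pole (cr P D) with hCdef
  rw [refl_apply] at hk
  have h4 := four_ne_zero_of_two h2
  by_cases ht : Bf v C / Qf F C = 0
  · left
    have hBC : Bf C v = 0 := by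
      rw [Bf_comm]; exact (div_eq_zero_iff.mp ht).resolve_right hC
    have hX : pole (cr P C) ≠ 0 := by
      rw [hpp]; exact smul_ne_zero (mul_ne_zero h4 hP) hD
    obtain ⟨m, hm⟩ := exists_smul_of_cr hX (cr_pole_eq_zero P C v hPv hBC)
    exact ⟨m * (4 * Qf F P), by rw [hm, hpp, smul_smul]⟩
  · right
    refine ⟨(1 - k) / (Bf v C / Qf F C), ?_⟩
    ext i
    have := congrFun hk i
    simp only [Pi.sub_apply, Pi.smul_apply, smul_eq_mul] at this ⊢
    rw [div_mul_eq_mul_div, div_eq_iff ht]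
    linear_combination this

/-! ### Membership in the counted set and quadratic characters -/

/-- The condition for the point spanned by `v` to lie in `N(p) ∩ I_ℓ`, where `P` is the pole of
`ℓ`. -/
def InS [Fintype F] (P p v : Fin 3 → F) : Prop :=
  ¬ IsSquare (Qf F v) ∧ Bf P v = 0 ∧
    (¬ IsSquare (Dl p v) ∨ (Fintype.card F % 4 ≠ 1 ∧ ∃ k : F, v = k • p))

lemma inS_smul [Fintype F] {P p v : Fin 3 → F} {k : F} (hk : k ≠ 0) :
    InS P p (k • v) ↔ InS P p v := by
  simp only [InS, Qf_smul, Bf_smul, Dl_smul, not_isSquare_sq_mul hk, mul_eq_zero, hk, false_or]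
  have : (∃ m : F, k • v = m • p) ↔ ∃ m : F, v = m • p := by
    constructor
    · rintro ⟨m, hm⟩
      exact ⟨k⁻¹ * m, by rw [← smul_smul, ← hm, inv_smul_smul₀ hk]⟩
    · rintro ⟨m, hm⟩
      exact ⟨k * m, by rw [hm, smul_smul]⟩
  rw [this]

lemma inS_refl [Fintype F] {P p C v : Fin 3 → F} (hC : Qf F C ≠ 0) (hP : Bf P C = 0)
    (hp : Bf p C = 0) (h : InS P p v) : InS P p (refl C v) := by
  refine ⟨by rw [Qf_refl hC]; exact h.1, by rw [Bf_refl hP]; exact h.2.1, ?_⟩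
  rcases h.2.2 with h | ⟨h, k, hk⟩
  · left; rw [Dl, Bf_refl hp, Qf_refl hC]; exact h
  · right; exact ⟨h, k, by rw [hk, map_smul, refl_fix hp]⟩

lemma Qf_pole_of_perp {P D : Fin 3 → F} (hPD : Bf P D = 0) :
    Qf F (pole (cr P D)) = 2 ^ 2 * (-1 * Qf F P * Qf F D) := by
  rw [Qf_pole_cr, Dl, hPD]; ring

/-- The product of three nonzero elements, the middle one a nonsquare, is a nonsquare iff the
outer two have equal quadratic character. -/
lemma not_isSquare_triple [Fintype F] {a b c : F} (ha : a ≠ 0) (hb : ¬ IsSquare b) (hc : c ≠ 0) :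
    ¬ IsSquare (a * b * c) ↔ (¬ IsSquare a ↔ ¬ IsSquare c) := by
  simp only [← quadraticChar_neg_one_iff_not_isSquare, map_mul] at hb ⊢
  rw [hb]
  rcases quadraticChar_dichotomy ha with h | h <;> rcases quadraticChar_dichotomy hc with h' | h' <;>
    simp [h, h']

lemma mem_C_iff [Fintype F] (h2 : (2 : F) ≠ 0) {P p D : Fin 3 → F} (hP : ¬ IsSquare (Qf F P))
    (hp : ¬ IsSquare (Qf F p)) (hPD : Bf P D = 0) (hD : Qf F D ≠ 0)
    (hpC : Bf p (pole (cr P D)) = 0) :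
    InS P p (pole (cr P D)) ↔ ¬ IsSquare (-1 : F) ∧ ¬ IsSquare (Qf F D) := by
  have h1 : (-1 : F) ≠ 0 := neg_ne_zero.mpr one_ne_zero
  have hP0 : Qf F P ≠ 0 := fun h => hP (h ▸ IsSquare.zero)
  have hp0 : Qf F p ≠ 0 := fun h => hp (h ▸ IsSquare.zero)
  have hC0 : Qf F (pole (cr P D)) ≠ 0 := by
    rw [Qf_pole_of_perp hPD]
    exact mul_ne_zero (pow_ne_zero 2 h2) (mul_ne_zero (mul_ne_zero h1 hP0) hD)
  have hC : ¬ IsSquare (Qf F (pole (cr P D))) ↔ (¬ IsSquare (-1 : F) ↔ ¬ IsSquare (Qf F D)) := by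
    rw [Qf_pole_of_perp hPD, not_isSquare_sq_mul h2, not_isSquare_triple h1 hP hD]
  have hDl : ¬ IsSquare (Dl p (pole (cr P D))) ↔
      (¬ IsSquare (-1 : F) ↔ ¬ IsSquare (Qf F (pole (cr P D)))) := by
    rw [← not_isSquare_triple h1 hp hC0, ← not_isSquare_sq_mul h2 (a := -1 * _ * _), Dl, hpC]
    ring_nf
  -- `C` is orthogonal to the non-isotropic `p`, so it is not a multiple of `p`.
  have hk : ¬ ∃ k : F, pole (cr P D) = k • p := by
    rintro ⟨k, hk⟩
    have h := hpC
    rw [hk, Bf_smul, Bf_self] at h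
    have : k = 0 := (mul_eq_zero.mp h).resolve_right (mul_ne_zero h2 hp0)
    apply hC0
    rw [hk, this, Qf_smul]; ring
  simp only [InS, Bf_pole_left, hDl, hk, and_false, or_false, true_and]
  tauto

lemma mem_D_iff [Fintype F] (hq : Odd (Fintype.card F)) (h2 : (2 : F) ≠ 0) {P p D : Fin 3 → F}
    (hP : ¬ IsSquare (Qf F P)) (hp : ¬ IsSquare (Qf F p)) (hPD : Bf P D = 0) (hD : Qf F D ≠ 0)
    {a b : F} (hab : p = a • P + b • D) :
    InS P p D ↔ ¬ IsSquare (-1 : F) ∧ ¬ IsSquare (Qf F D) := by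
  have h1 : (-1 : F) ≠ 0 := neg_ne_zero.mpr one_ne_zero
  have hP0 : Qf F P ≠ 0 := fun h => hP (h ▸ IsSquare.zero)
  have hDl : Dl p D = (a * 2) ^ 2 * (-1 * Qf F P * Qf F D) := by
    have e1 : Dl p D = a ^ 2 * Dl P D := by
      rw [hab]; simp only [Dl, Bf, Qf, Pi.add_apply, Pi.smul_apply, smul_eq_mul]; ring
    rw [e1, Dl, hPD]; ring
  have hcard : Fintype.card F % 4 ≠ 1 ↔ ¬ IsSquare (-1 : F) := by
    rw [FiniteField.isSquare_neg_one_iff]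
    have := Nat.odd_iff.mp hq
    omega
  simp only [InS, hPD, true_and, hcard]
  by_cases ha : a = 0
  · -- Here `p` is the point `D`, and membership is decided by the convention on `p ∈ N(p)`.
    have hpD : p = b • D := by rw [hab, ha]; simp
    have hb : b ≠ 0 := by
      rintro rfl
      exact hp ⟨0, by rw [hpD, Qf_smul]; ring⟩
    have hex : ∃ k : F, D = k • p := ⟨b⁻¹, by rw [hpD, inv_smul_smul₀ hb]⟩
    have hsq : IsSquare (Dl p D) := ⟨0, by rw [hDl, ha]; ring⟩
    tauto
  · have hex : ¬ ∃ k : F, D = k • p := by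
      rintro ⟨k, hk⟩
      have h0 : Dl p D = 0 := by
        rw [hk, Dl_smul, Dl, Bf_self]; ring
      rw [hDl] at h0
      exact mul_ne_zero (pow_ne_zero 2 (mul_ne_zero ha h2))
        (mul_ne_zero (mul_ne_zero h1 hP0) hD) h0
    rw [hDl, not_isSquare_sq_mul (mul_ne_zero ha h2), not_isSquare_triple h1 hP hD]
    tauto

end Vectors

/-! ### Parity from an involution -/

/-- A finite set with an involution whose fixed points lie among two points, both in the set or
both outside it, has an even number of elements. -/
lemma even_ncard_of_involution {α : Type} [Finite α] (S : Set α) (σ : α → α)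
    (hσ : ∀ x, σ (σ x) = x) (hS : ∀ x ∈ S, σ x ∈ S) {c d : α} (hcd : c ≠ d)
    (hc : σ c = c) (hd : σ d = d) (hfix : ∀ x ∈ S, σ x = x → x = c ∨ x = d)
    (hiff : c ∈ S ↔ d ∈ S) : Even S.ncard := by
  have := Fintype.ofFinite α
  rw [Set.ncard_eq_toFinset_card', ← ZMod.natCast_eq_zero_iff_even, Finset.card_eq_sum_ones,
    Nat.cast_sum]
  -- Exchanging the two fixed points makes the involution fixed-point free.
  refine Finset.sum_involution (fun x _ => if x = c then d else if x = d then c else σ x)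
    ?_ ?_ ?_ ?_
  · intro x _; decide
  · intro x hx _
    have := hfix x (Set.mem_toFinset.mp hx)
    grind
  · intro x hx
    simp only [Set.mem_toFinset] at hx ⊢
    grind
  · intro x hx
    grind

/-! ### Points of the projective plane -/

section Points

variable {F : Type} [Field F]

lemma passant_join_iff (p r : Pt F) (hpr : r ≠ p) :
    (∃ m, Passant F m ∧ OnL F p m ∧ OnL F r m) ↔ ¬ IsSquare (Dl p.rep r.rep) := by
  constructor
  · rintro ⟨m, hm, h1, h2⟩
    have hz : cr m.rep (cr p.rep r.rep) = 0 := by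
      simp only [OnL] at h1 h2
      ext i
      fin_cases i <;> simp [cr]
      · linear_combination p.rep 0 * h2 - r.rep 0 * h1
      · linear_combination p.rep 1 * h2 - r.rep 1 * h1
      · linear_combination p.rep 2 * h2 - r.rep 2 * h1
    obtain ⟨k, hk⟩ := exists_smul_of_cr m.rep_nonzero hz
    have hk0 : k ≠ 0 := by
      rintro rfl
      rw [zero_smul] at hk
      obtain ⟨c, hc⟩ := exists_smul_of_cr p.rep_nonzero hk
      apply hpr
      rw [← r.mk_rep, ← p.mk_rep, Projectivization.mk_eq_mk_iff']
      exact ⟨c, hc.symm⟩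
    have : Dl p.rep r.rep = k ^ 2 * lineDisc F m := by
      rw [← Qf_pole_cr, hk]
      simp [Qf, pole, lineDisc]; ring
    rw [this, not_isSquare_sq_mul hk0]
    exact hm
  · intro h
    have h0 : cr p.rep r.rep ≠ 0 := by
      intro h0
      apply h
      rw [← Qf_pole_cr, h0]
      exact ⟨0, by simp [Qf, pole]⟩
    obtain ⟨a, ha⟩ := Projectivization.exists_smul_eq_mk_rep F _ h0
    have ha' : (Projectivization.mk F _ h0).rep = (a : F) • cr p.rep r.rep := ha.symm
    refine ⟨Projectivization.mk F _ h0, ?_, ?_, ?_⟩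
    · have : lineDisc F (Projectivization.mk F _ h0) = (a : F) ^ 2 * Dl p.rep r.rep := by
        rw [lineDisc, ha', ← Qf_pole_cr]
        simp [Qf, pole]; ring
      rw [Passant, this]
      exact (not_isSquare_sq_mul a.ne_zero).mpr h
    · rw [OnL, ha']; simp only [cr, Pi.smul_apply, smul_eq_mul, Matrix.cons_val]; ring
    · rw [OnL, ha']; simp only [cr, Pi.smul_apply, smul_eq_mul, Matrix.cons_val]; ring

lemma mem_iff_inS [Fintype F] (h2 : (2 : F) ≠ 0) (p ℓ r : Pt F) (hl : Passant F ℓ) :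
    r ∈ NbhdSet F p ∩ {r | Internal F r ∧ OnL F r ℓ} ↔ InS (pole ℓ.rep) p.rep r.rep := by
  have hB : Bf (pole ℓ.rep) r.rep = 0 ↔ OnL F r ℓ := by
    rw [Bf_pole, OnL, mul_eq_zero, or_iff_right (neg_ne_zero.mpr h2)]
  have hI : ¬ IsSquare (Qf F r.rep) ↔ Internal F r := Iff.rfl
  have hk : (∃ k : F, r.rep = k • p.rep) ↔ r = p := by
    have h := Projectivization.mk_eq_mk_iff' F r.rep p.rep r.rep_nonzero p.rep_nonzero
    rw [r.mk_rep, p.mk_rep] at h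
    rw [h]
    exact exists_congr fun _ => eq_comm
  rw [InS, hB, hI, hk]
  by_cases hrp : r = p
  · have hsq : IsSquare (Dl p.rep r.rep) := ⟨0, by rw [hrp, Dl, Bf_self]; ring⟩
    -- The passant through `p = r` needed for `p ∈ N(p)` is `ℓ` itself.
    have hex : OnL F r ℓ → ∃ m, Passant F m ∧ OnL F p m ∧ OnL F r m :=
      fun h => ⟨ℓ, hl, hrp ▸ h, h⟩
    by_cases hc : Fintype.card F % 4 = 1
    · simp [NbhdSet, hc, hrp, hrp ▸ hsq]
    · simp only [NbhdSet, hc, if_false, Set.mem_inter_iff, Set.mem_ofPred_eq]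
      tauto
  · rw [← passant_join_iff p r hrp]
    by_cases hc : Fintype.card F % 4 = 1
    · simp only [NbhdSet, hc, if_true, Set.mem_inter_iff, Set.mem_ofPred_eq]
      generalize (∃ m, Passant F m ∧ OnL F p m ∧ OnL F r m) = E
      grind
    · simp only [NbhdSet, hc, if_false, Set.mem_inter_iff, Set.mem_ofPred_eq]
      generalize (∃ m, Passant F m ∧ OnL F p m ∧ OnL F r m) = E
      grind

lemma inS_mk_rep [Fintype F] {P p v : Fin 3 → F} (hv : v ≠ 0) :
    InS P p (Projectivization.mk F v hv).rep ↔ InS P p v := by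
  obtain ⟨a, ha⟩ := Projectivization.exists_smul_eq_mk_rep F v hv
  rw [← ha]
  exact inS_smul a.ne_zero

/-- The parity statement in vector form, once `D` on `ℓ` with `p` in the span of `P` and `D` has
been chosen. -/
lemma even_of_decomp [Fintype F] (hq : Odd (Fintype.card F)) (h2 : (2 : F) ≠ 0)
    {P p D : Fin 3 → F} (hP : ¬ IsSquare (Qf F P)) (hp : ¬ IsSquare (Qf F p)) (hPD : Bf P D = 0)
    (hD : D ≠ 0) {a b : F} (hab : p = a • P + b • D) :
    Even ({r : Pt F | InS P p r.rep}.ncard) := by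
  have hP0 : Qf F P ≠ 0 := fun h => hP (h ▸ IsSquare.zero)
  have hQD : Qf F D ≠ 0 := fun h => hP (isSquare_of_perp_isotropic h2 hD h hPD)
  have hPC := Bf_pole_left P D
  have hDC := Bf_pole_right P D
  have hpC : Bf p (pole (cr P D)) = 0 := by
    rw [Bf_comm] at hPC hDC ⊢
    have : Bf (pole (cr P D)) p = a * Bf (pole (cr P D)) P + b * Bf (pole (cr P D)) D := by
      rw [hab]; simp only [Bf, Pi.add_apply, Pi.smul_apply, smul_eq_mul]; ring
    rw [this, hPC, hDC]; ring
  have hQC : Qf F (pole (cr P D)) ≠ 0 := by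
    rw [Qf_pole_of_perp hPD]
    exact mul_ne_zero (pow_ne_zero 2 h2)
      (mul_ne_zero (mul_ne_zero (neg_ne_zero.mpr one_ne_zero) hP0) hQD)
  have hC : pole (cr P D) ≠ 0 := fun h => hQC (by rw [h]; simp [Qf])
  have hiff := (mem_C_iff h2 hP hp hPD hQD hpC).trans (mem_D_iff hq h2 hP hp hPD hQD hab).symm
  have hfc := fun (v : Fin 3 → F) (k : F) => fixed_cases (v := v) (k := k) h2 hP0 hD hPD hQC
  set C := pole (cr P D)
  refine even_ncard_of_involution _ (Projectivization.map (refl C) (refl_injective hQC)) ?_ ?_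
    (c := Projectivization.mk F C hC) (d := Projectivization.mk F D hD) ?_ ?_ ?_ ?_ ?_
  · intro x
    induction x using Projectivization.ind with | h v hv =>
    simp only [Projectivization.map_mk, refl_refl hQC]
  · intro x hx
    induction x using Projectivization.ind with | h v hv =>
    simp only [Set.mem_ofPred_eq, Projectivization.map_mk, inS_mk_rep] at hx ⊢
    exact inS_refl hQC hPC hpC hx
  · rw [Ne, Projectivization.mk_eq_mk_iff']
    rintro ⟨k, hk⟩
    have h := hDC
    rw [← hk, Bf_smul, Bf_self] at h
    have hk0 : k = 0 := (mul_eq_zero.mp h).resolve_right (mul_ne_zero h2 hQD)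
    exact hC (by rw [← hk, hk0, zero_smul])
  · rw [Projectivization.map_mk, Projectivization.mk_eq_mk_iff']
    refine ⟨-1, ?_⟩
    rw [refl_apply, Bf_self, mul_div_assoc, div_self hQC]
    ext i; simp only [Pi.sub_apply, Pi.smul_apply, smul_eq_mul]; ring
  · simp only [Projectivization.map_mk, refl_fix hDC]
  · intro x hx hfx
    induction x using Projectivization.ind with | h v hv =>
    simp only [Set.mem_ofPred_eq, Projectivization.map_mk, inS_mk_rep] at hx hfx
    obtain ⟨k, hk⟩ := (Projectivization.mk_eq_mk_iff' F _ _ _ _).mp hfx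
    rcases hfc v k hx.2.1 hk.symm with ⟨m, hm⟩ | ⟨m, hm⟩
    · right; exact (Projectivization.mk_eq_mk_iff' F _ _ _ _).mpr ⟨m, hm.symm⟩
    · left; exact ((Projectivization.mk_eq_mk_iff' F _ _ _ _).mpr ⟨m, hm⟩).symm
  · simp only [Set.mem_ofPred_eq, inS_mk_rep]; exact hiff

end Points

/-- For every internal point `p` and passant line `ℓ`, `|N(p) ∩ I_ℓ|` is even. -/
theorem nbhd_inter_line_even (hq : Odd (Fintype.card K)) (p ℓ : Pt K)
    (hp : Internal K p) (hl : Passant K ℓ) :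
    Even ((NbhdSet K p ∩ {r | Internal K r ∧ OnL K r ℓ}).ncard) := by
  have h2 : (2 : K) ≠ 0 := by
    apply Ring.two_ne_zero
    rw [Ne, FiniteField.even_card_iff_char_two]
    have := Nat.odd_iff.mp hq
    omega
  have hset : NbhdSet K p ∩ {r | Internal K r ∧ OnL K r ℓ} =
      {r : Pt K | InS (pole ℓ.rep) p.rep r.rep} := by
    ext r; exact mem_iff_inS h2 p ℓ r hl
  rw [hset]
  have hP : ¬ IsSquare (Qf K (pole ℓ.rep)) := by
    have : Qf K (pole ℓ.rep) = lineDisc K ℓ := by simp [Qf, pole, lineDisc]; ring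
    rw [this]; exact hl
  generalize pole ℓ.rep = P at hP
  have hP0 : Qf K P ≠ 0 := fun h => hP (h ▸ IsSquare.zero)
  by_cases hD : (2 * Qf K P) • p.rep - Bf P p.rep • P = 0
  · -- Here `p` is the pole of `ℓ`, and any member of the set can serve as `D`.
    rcases Set.eq_empty_or_nonempty {r : Pt K | InS P p.rep r.rep} with he | ⟨r, hr⟩
    · rw [he]; simp
    · refine even_of_decomp hq h2 hP hp hr.2.1 r.rep_nonzero
        (a := Bf P p.rep / (2 * Qf K P)) (b := 0) ?_
      ext i
      have := congrFun hD i
      simp only [Pi.sub_apply, Pi.add_apply, Pi.smul_apply, smul_eq_mul, Pi.zero_apply] at this ⊢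
      field_simp
      linear_combination this
  · refine even_of_decomp hq h2 hP hp ?_ hD
      (a := Bf P p.rep / (2 * Qf K P)) (b := 1 / (2 * Qf K P)) ?_
    · rw [Bf_sub_smul, Bf_smul, Bf_self]; ring
    · ext i
      simp only [Pi.sub_apply, Pi.add_apply, Pi.smul_apply, smul_eq_mul]
      field_simp
      ring

end ConicPaper
end
end
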